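/- Let D ⊂ ℝⁿ be an open set containing x_eq. Then D equals the region of attraction D(x_eq) if and only if there exist a continuous function W : D → ℝ that is continuously differentiable on D and a continuous function η : ℝⁿ → ℝ such that: (1) 0 < W(x) < 1 for all x ∈ D \ {x_eq} and W(x_eq) = 0; (2) η(x_eq) = 0 and η(x) > 0 for all x ∈ D \ {x_eq}; (3) there exists c₀ > 0 such that for every c₃ ∈ (0, c₀) there exist c₁, c₂ > 0 with W(x) > c₁ and η(x) > c₂ whenever x ∈ D and |x − x_eq| ≥ c₃; (4) for every y ∈ ∂D and every sequence x_k ∈ D with x_k → y, W(x_k) → 1; (5) ∇W(x)·f(x) = −η(x)(1 − W(x)) for all x ∈ D. -/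

import Mathlib

open Filter Topology
open scoped RealInnerProductSpace

noncomputable section

/-!
On the region of attraction put `V₀ x = ∫₀^∞ ‖φ t x - x₀‖ᵖ dt`. It blows up at the boundary and
decreases along trajectories at the rate `‖x - x₀‖ᵖ`. Since `f` is only locally Lipschitz, `V₀` is
only locally Lipschitz too, but for `p` large compared with the ratio of the Lipschitz constant of
`f` to the decay rate `c` its Lipschitz constant on the `s`-ball around `x₀` is `O(s)`. Averaging
`V₀` over balls whose radius is a small `C¹` function of the centre yields a function `V` that is
`C¹` away from `x₀` and changes the value and the derivative along `f` as little as desired; by the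
`O(s)` bound it is `C¹` at `x₀` as well. Then `W = 1 - exp (-V)`.

Conversely, `1 - W` extended by `0` is continuous and solves the linear equation `u' = η u` along
every trajectory, so trajectories neither enter nor leave `D`. Hence `D` contains the region of
attraction; and a trajectory in `D` that does not reach the stability neighbourhood would make
`1 - W ≤ 1` grow exponentially.
-/

section Calculus

open Set Metric

theorem eq_of_hasDerivWithinAt_zero_of_ne_zero {F : Type*} [NormedAddCommGroup F]
    [NormedSpace ℝ F] {s : Set ℝ} {g : ℝ → F} (hs : Convex ℝ s) (hg : ContinuousOn g s)
    (hg' : ∀ t ∈ s, g t ≠ 0 → HasDerivWithinAt g 0 s t) {a b : ℝ} (ha : a ∈ s) (hb : b ∈ s) :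
    g a = g b := by
  wlog hne : g a ≠ 0 generalizing a b
  · by_contra hab
    rw [not_not] at hne
    exact hab (this hb ha fun hb0 => hab (hne.trans hb0.symm)).symm
  have hclopen : IsClopen {t : s | g t = g a} := by
    refine ⟨isClosed_eq (continuousOn_iff_continuous_domRestrict.1 hg) continuous_const,
      isOpen_iff_mem_nhds.2 fun t ht => ?_⟩
    have hne_near : ∀ᶠ t' in 𝓝[s] (t : ℝ), g t' ≠ 0 :=
      (hg t t.2).eventually_ne ((ht : g t = g a) ▸ hne)
    obtain ⟨ε, hε, hball⟩ := mem_nhdsWithin_iff.1 hne_near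
    filter_upwards [ball_mem_nhds t hε] with t' ht'
    have hconst := ((convex_ball (t : ℝ) ε).inter hs).norm_image_sub_le_of_norm_hasDerivWithin_le
      (C := 0) (fun u hu => (hg' u hu.2 (hball hu)).mono inter_subset_right) (by simp)
      ⟨mem_ball_self hε, t.2⟩ ⟨ht', t'.2⟩
    rw [zero_mul, norm_le_zero_iff, sub_eq_zero] at hconst
    exact hconst.trans ht
  have : PreconnectedSpace s := isPreconnected_iff_preconnectedSpace.1 hs.isPreconnected
  have hb' : (⟨b, hb⟩ : s) ∈ {t : s | g t = g a} := hclopen.eq_univ ⟨⟨a, ha⟩, rfl⟩ ▸ mem_univ _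
  exact hb'.symm

theorem eq_mul_exp_integral_of_hasDerivWithinAt {u g : ℝ → ℝ} (hu : ContinuousOn u (Ici 0))
    (hg : ContinuousOn g (Ici 0))
    (hu' : ∀ t ≥ 0, u t ≠ 0 → HasDerivWithinAt u (g t * u t) (Ici 0) t) {t : ℝ} (ht : 0 ≤ t) :
    u t = u 0 * Real.exp (∫ s in 0..t, g s) := by
  set G : ℝ → ℝ := fun t => ∫ s in 0..t, g (max s 0)
  have hG : ∀ t, HasDerivAt G (g (max t 0)) t := fun t =>
    ((hg.comp_continuous (by fun_prop) fun s => le_max_right s 0).integral_hasStrictDerivAt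
      0 t).hasDerivAt
  have hGc : Continuous G := continuous_iff_continuousAt.2 fun t => (hG t).continuousAt
  have hv := eq_of_hasDerivWithinAt_zero_of_ne_zero (g := fun t => u t * Real.exp (-G t))
    (convex_Ici 0) (hu.mul (by fun_prop)) (fun t ht hne => by
      have h := (hu' t ht (left_ne_zero_of_mul hne)).mul (hG t).neg.exp.hasDerivWithinAt
      rw [max_eq_left ht] at h
      exact h.congr_deriv (by ring)) self_mem_Ici ht
  have hGt : G t = ∫ s in 0..t, g s := intervalIntegral.integral_congr fun s hs => by
    rw [uIcc_of_le ht] at hs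
    simp only [max_eq_left hs.1]
  have hG0 : G 0 = 0 := intervalIntegral.integral_same
  simp only [hG0, neg_zero, Real.exp_zero, mul_one] at hv
  rw [hv, mul_assoc, ← hGt, ← Real.exp_add, neg_add_cancel, Real.exp_zero, mul_one]

theorem continuous_indicator_of_tendsto_frontier {X Y : Type*} [TopologicalSpace X]
    [TopologicalSpace Y] [Zero Y] {s : Set X} {g : X → Y} (hs : IsOpen s) (hg : ContinuousOn g s)
    (hlim : ∀ x ∈ frontier s, Tendsto g (𝓝[s] x) (𝓝 0)) : Continuous (s.indicator g) := by
  refine continuous_iff_continuousAt.2 fun x => ?_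
  by_cases hx : x ∈ s
  · refine (hg.continuousAt (hs.mem_nhds hx)).congr ?_
    filter_upwards [hs.mem_nhds hx] with y hy using (indicator_of_mem hy g).symm
  rw [ContinuousAt, indicator_of_notMem hx, ← nhdsWithin_univ, ← union_compl_self s,
    nhdsWithin_union]
  refine Tendsto.sup ?_ (tendsto_nhds_of_eventually_eq ?_)
  · refine Tendsto.congr' (f₁ := g) ?_ ?_
    · filter_upwards [self_mem_nhdsWithin] with y hy using (indicator_of_mem hy g).symm
    by_cases hcl : x ∈ closure s
    · exact hlim x ⟨hcl, by rwa [hs.interior_eq]⟩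
    · simp [notMem_closure_iff_nhdsWithin_eq_bot.1 hcl]
  · filter_upwards [self_mem_nhdsWithin] with y hy using indicator_of_notMem hy g

theorem contDiffOn_one_of_contDiffOn_punctured {E F : Type*} [NormedAddCommGroup E]
    [NormedSpace ℝ E] [NormedAddCommGroup F] [NormedSpace ℝ F] {D : Set E} {V : E → F}
    {V' : E →L[ℝ] F} {x₀ : E} (hD : IsOpen D) (hV : ContDiffOn ℝ 1 V (D \ {x₀}))
    (hV' : HasFDerivAt V V' x₀) (hlim : Tendsto (fderiv ℝ V) (𝓝[≠] x₀) (𝓝 V')) :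
    ContDiffOn ℝ 1 V D := by
  have hU : IsOpen (D \ {x₀}) := hD.sdiff isClosed_singleton
  rw [← zero_add (1 : WithTop ℕ∞), contDiffOn_succ_iff_fderiv_of_isOpen hD, contDiffOn_zero]
  refine ⟨fun x hx => ?_, by simp, fun x hx => ContinuousAt.continuousWithinAt ?_⟩
  · obtain rfl | hne := eq_or_ne x x₀
    · exact hV'.differentiableAt.differentiableWithinAt
    · exact ((hV.differentiableOn one_ne_zero).differentiableAt
        (hU.mem_nhds ⟨hx, hne⟩)).differentiableWithinAt
  · obtain rfl | hne := eq_or_ne x x₀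
    · rwa [continuousAt_iff_punctured_nhds, hV'.fderiv]
    · exact (hV.continuousOn_fderiv_of_isOpen hU le_rfl).continuousAt (hU.mem_nhds ⟨hx, hne⟩)

theorem abs_norm_pow_sub_norm_pow_le {E : Type*} [SeminormedAddCommGroup E] {a b : E} {B : ℝ}
    (ha : ‖a‖ ≤ B) (hb : ‖b‖ ≤ B) (p : ℕ) :
    |‖a‖ ^ p - ‖b‖ ^ p| ≤ p * B ^ (p - 1) * ‖a - b‖ := by
  refine (abs_pow_sub_pow_le ‖a‖ ‖b‖ p).trans ?_
  rw [abs_norm, abs_norm, mul_assoc, mul_comm]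
  have hB : 0 ≤ B := (norm_nonneg a).trans ha
  gcongr
  exacts [max_le ha hb, abs_norm_sub_norm_le a b]

theorem lipschitzOnWith_intervalIntegral {X : Type*} [PseudoMetricSpace X] {s : Set X}
    {F : ℝ → X → ℝ} {K T : NNReal}
    (hint : ∀ x ∈ s, IntervalIntegrable (F · x) MeasureTheory.volume 0 T)
    (hF : ∀ t ∈ Icc (0 : ℝ) T, LipschitzOnWith K (F t) s) :
    LipschitzOnWith (T * K) (fun x => ∫ t in (0 : ℝ)..T, F t x) s := by
  refine LipschitzOnWith.of_dist_le_mul fun x hx y hy => ?_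
  rw [dist_eq_norm, ← intervalIntegral.integral_sub (hint x hx) (hint y hy)]
  have hbound := intervalIntegral.norm_integral_le_of_norm_le_const (a := 0) (b := T)
    (f := fun t => F t x - F t y) (C := K * dist x y) fun t ht => by
      rw [uIoc_of_le T.coe_nonneg] at ht
      exact dist_eq_norm (F t x) (F t y) ▸ (hF t ⟨ht.1.le, ht.2⟩).dist_le_mul x hx y hy
  rw [sub_zero, abs_of_nonneg T.coe_nonneg] at hbound
  exact hbound.trans_eq (by push_cast; ring)

end Calculus

section Radius

open Set Metric

theorem exists_continuousOn_pos_of_eventually {X : Type*} [MetricSpace X] {U : Set X}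
    {P : X → ℝ → Prop} (hP : ∀ x ∈ U, ∀ᶠ q in 𝓝[>] (0 : ℝ) ×ˢ 𝓝[U] x, P q.2 q.1) :
    ∃ ε : X → ℝ, ContinuousOn ε U ∧ (∀ x ∈ U, 0 < ε x) ∧ ∀ x ∈ U, ∀ ρ ∈ Ioc 0 (ε x), P x ρ := by
  classical
  obtain ⟨g, hg⟩ := exists_continuous_forall_mem_convex_of_local_const
    (X := U) (t := fun x => {ρ : ℝ | 0 < ρ ∧ ∀ ρ' ∈ Ioc 0 ρ, P x ρ'})
    (fun x => (convex_iff_ordConnected.2 ⟨fun a ha b hb c hc =>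
      ⟨ha.1.trans_le hc.1, fun ρ' hρ' => hb.2 ρ' ⟨hρ'.1, hρ'.2.trans hc.2⟩⟩⟩)) (fun x => by
      obtain ⟨p, hp, q, hq, hpq⟩ := eventually_prod_iff.1 (hP x x.2)
      obtain ⟨b, hb, hbp⟩ := mem_nhdsGT_iff_exists_Ioc_subset.1 hp
      refine ⟨b, ?_⟩
      filter_upwards [preimage_coe_mem_nhds_subtype.2 hq] with y hy
      exact ⟨hb, fun ρ hρ => hpq (hbp hρ) hy⟩)
  refine ⟨fun x => if hx : x ∈ U then g ⟨x, hx⟩ else 1, ?_, fun x hx => ?_, fun x hx => ?_⟩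
  · rw [continuousOn_iff_continuous_domRestrict]
    exact g.continuous.congr fun x => by simp
  · simpa [hx] using (hg ⟨x, hx⟩).1
  · simpa [hx] using (hg ⟨x, hx⟩).2

theorem exists_contDiff_one_deriv_le {m : ℝ → ℝ} (hm : ContinuousOn m (Ioi 0))
    (hpos : ∀ a > 0, 0 < m a) :
    ∃ ψ : ℝ → ℝ, ContDiff ℝ 1 ψ ∧ (∀ a ≤ 0, ψ a = 0) ∧
      ∀ a > 0, 0 < ψ a ∧ 0 ≤ deriv ψ a ∧ deriv ψ a ≤ m a := by
  set g : ℝ → ℝ := (Ioi 0).indicator fun a => min (m a) a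
  have hg : Continuous g := by
    refine continuous_indicator_of_tendsto_frontier isOpen_Ioi (hm.inf continuousOn_id) ?_
    simp only [frontier_Ioi, mem_singleton_iff, forall_eq]
    refine squeeze_zero' ?_ ?_ (tendsto_id.mono_left (nhdsWithin_le_nhds (a := (0 : ℝ))))
    · filter_upwards [self_mem_nhdsWithin] with a ha using (lt_min (hpos a ha) ha).le
    · exact Eventually.of_forall fun a => min_le_right _ _
  have hg_eq : ∀ a > 0, g a = min (m a) a := fun a ha => indicator_of_mem ha _
  have hg_pos : ∀ a > 0, 0 < g a := fun a ha => by simpa [hg_eq a ha, ha] using hpos a ha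
  have hderiv : deriv (fun a => ∫ s in (0 : ℝ)..a, g s) = g := funext (hg.deriv_integral g 0)
  refine ⟨fun a => ∫ s in (0 : ℝ)..a, g s, ?_, fun a ha => ?_, fun a ha => ⟨?_, ?_⟩⟩
  · rw [contDiff_one_iff_deriv, hderiv]
    exact ⟨fun a => (hg.integral_hasStrictDerivAt 0 a).hasDerivAt.differentiableAt, hg⟩
  · refine intervalIntegral.integral_zero_ae (Eventually.of_forall fun s hs => ?_)
    rw [uIoc_of_ge ha] at hs
    exact indicator_of_notMem (notMem_Ioi.2 hs.2) _
  · exact intervalIntegral.intervalIntegral_pos_of_pos_on (hg.intervalIntegrable 0 a)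
      (fun s hs => hg_pos s hs.1) ha
  · rw [hderiv]
    exact ⟨(hg_pos a ha).le, (hg_eq a ha).trans_le (min_le_left _ _)⟩

variable {E : Type*} [NormedAddCommGroup E] [NormedSpace ℝ E] [FiniteDimensional ℝ E]

theorem exists_contDiff_one_isCompact_superlevel {U : Set E} (hU : IsOpen U) :
    ∃ G : E → ℝ, ContDiff ℝ 1 G ∧ (∀ x, 0 ≤ G x ∧ G x ≤ 1) ∧ (∀ x, 0 < G x ↔ x ∈ U) ∧
      ∀ a > 0, IsCompact {x | a ≤ G x} := by
  obtain ⟨g, hsupp, hg, hrange⟩ := hU.exists_contDiff_support_eq (n := 1)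
  have hg01 : ∀ x, 0 ≤ g x ∧ g x ≤ 1 := fun x => hrange (mem_range_self x)
  have hden : ∀ x : E, 1 ≤ 1 + ‖toEuclidean x‖ ^ 2 := fun x => by simp
  have hG : ContDiff ℝ 1 fun x : E => g x / (1 + ‖toEuclidean x‖ ^ 2) :=
    hg.div (contDiff_const.add (toEuclidean.contDiff.norm_sq ℝ)) fun x =>
      (zero_lt_one.trans_le (hden x)).ne'
  refine ⟨_, hG, fun x => ⟨div_nonneg (hg01 x).1 (zero_le_one.trans (hden x)),
    div_le_one_of_le₀ ((hg01 x).2.trans (hden x)) (zero_le_one.trans (hden x))⟩, fun x => ?_,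
    fun a ha => ?_⟩
  · rw [div_pos_iff_of_pos_right (zero_lt_one.trans_le (hden x)), ← hsupp, Function.mem_support]
    exact (hg01 x).1.lt_iff_ne'
  · refine (toEuclidean.toHomeomorph.isCompact_preimage.2
      (isCompact_closedBall 0 √(1 / a))).of_isClosed_subset
      (isClosed_le continuous_const hG.continuous) fun x hx => ?_
    have hle : a * (1 + ‖toEuclidean x‖ ^ 2) ≤ 1 :=
      ((le_div_iff₀ (zero_lt_one.trans_le (hden x))).1 hx).trans (hg01 x).2
    rw [mem_preimage, mem_closedBall_zero_iff]
    refine Real.le_sqrt_of_sq_le ((le_div_iff₀ ha).2 ?_)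
    change ‖toEuclidean x‖ ^ 2 * a ≤ 1
    linarith

theorem exists_continuousOn_Ioi_pos_le_of_le {X : Type*} [TopologicalSpace X] {U : Set X}
    {G e : X → ℝ} (he : ContinuousOn e U) (hpos : ∀ x ∈ U, 0 < e x) (hGU : ∀ x, 0 < G x → x ∈ U)
    (hG : ∀ a > 0, IsCompact {x | a ≤ G x}) :
    ∃ m : ℝ → ℝ, ContinuousOn m (Ioi 0) ∧ (∀ a > 0, 0 < m a) ∧
      ∀ a > 0, ∀ x, a ≤ G x → m a ≤ e x := by
  have hsub : ∀ a > 0, {x | a ≤ G x} ⊆ U := fun a ha x hx => hGU x (ha.trans_le hx)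
  obtain ⟨m, hm, hmpos, hme⟩ := exists_continuousOn_pos_of_eventually (U := Ioi (0 : ℝ))
    (P := fun a m => ∀ x, a ≤ G x → m ≤ e x) fun a (ha : 0 < a) => by
      obtain ⟨b, hb, hbe⟩ := (hG (a / 2) (half_pos ha)).exists_forall_le'
        (he.mono (hsub _ (half_pos ha))) fun x hx => hpos x (hsub _ (half_pos ha) hx)
      filter_upwards [prod_mem_prod (Ioc_mem_nhdsGT hb)
        (mem_nhdsWithin_of_mem_nhds (lt_mem_nhds (half_lt_self ha)))] with q hq x hx
      exact hq.1.2.trans (hbe x (hq.2.le.trans hx))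
  exact ⟨m, hm, hmpos, fun a ha => hme a ha (m a) ⟨hmpos a ha, le_rfl⟩⟩

theorem exists_contDiff_one_norm_fderiv_le {U : Set E} (hU : IsOpen U) {ε : E → ℝ}
    (hε : ContinuousOn ε U) (hpos : ∀ x ∈ U, 0 < ε x) :
    ∃ r : E → ℝ, ContDiff ℝ 1 r ∧ (∀ x ∉ U, r x = 0) ∧
      ∀ x ∈ U, 0 < r x ∧ r x ≤ ε x ∧ ‖fderiv ℝ r x‖ ≤ ε x := by
  obtain ⟨G, hG, hG01, hGU, hGc⟩ := exists_contDiff_one_isCompact_superlevel hU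
  set e : E → ℝ := fun x => ε x / (1 + ‖fderiv ℝ G x‖)
  have he : ContinuousOn e U :=
    hε.div (continuous_const.add (hG.continuous_fderiv one_ne_zero).norm).continuousOn
      fun x _ => by positivity
  have hepos : ∀ x ∈ U, 0 < e x := fun x hx => div_pos (hpos x hx) (by positivity)
  obtain ⟨m, hm, hmpos, hme⟩ :=
    exists_continuousOn_Ioi_pos_le_of_le he hepos (fun x => (hGU x).1) hGc
  obtain ⟨ψ, hψ, hψ0, hψ'⟩ := exists_contDiff_one_deriv_le hm hmpos
  refine ⟨ψ ∘ G, hψ.comp hG, fun x hx => hψ0 _ (not_lt.1 fun h => hx ((hGU x).1 h)), ?_⟩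
  intro x hx
  have hGx : 0 < G x := (hGU x).2 hx
  have hme' : ∀ a ∈ Ioc 0 (G x), |deriv ψ a| ≤ e x := fun a ha => by
    rw [abs_of_nonneg (hψ' a ha.1).2.1]
    exact (hψ' a ha.1).2.2.trans (hme a ha.1 x ha.2)
  have heε : e x * (1 + ‖fderiv ℝ G x‖) = ε x := div_mul_cancel₀ _ (by positivity)
  refine ⟨(hψ' _ hGx).1, ?_, ?_⟩
  · obtain ⟨a, ha, hslope⟩ := exists_deriv_eq_slope ψ hGx hψ.continuous.continuousOn
      (hψ.differentiable one_ne_zero).differentiableOn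
    rw [hψ0 0 le_rfl, sub_zero, sub_zero, eq_div_iff hGx.ne'] at hslope
    calc ψ (G x) = deriv ψ a * G x := hslope.symm
      _ ≤ e x * 1 := mul_le_mul ((le_abs_self _).trans (hme' a ⟨ha.1, ha.2.le⟩)) (hG01 x).2
        hGx.le (hepos x hx).le
      _ ≤ e x * (1 + ‖fderiv ℝ G x‖) := by
        have := (hepos x hx).le
        gcongr
        simp
      _ = ε x := heε
  · have hcomp : fderiv ℝ (ψ ∘ G) x = deriv ψ (G x) • fderiv ℝ G x :=
      ((hψ.differentiable one_ne_zero _).hasDerivAt.comp_hasFDerivAt x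
        (hG.differentiable one_ne_zero x).hasFDerivAt).fderiv
    calc ‖fderiv ℝ (ψ ∘ G) x‖ = |deriv ψ (G x)| * ‖fderiv ℝ G x‖ := by
          rw [hcomp, norm_smul, Real.norm_eq_abs]
      _ ≤ e x * (1 + ‖fderiv ℝ G x‖) := by
        have := (hepos x hx).le
        gcongr
        exacts [hme' _ ⟨hGx, le_rfl⟩, by simp]
      _ = ε x := heε

end Radius

section Mollify

open Set Metric MeasureTheory Module

theorem abs_integral_sub_integral_sub_le {Ω : Type*} [MeasurableSpace Ω] {ν : Measure Ω}
    [IsProbabilityMeasure ν] {F G : Ω → ℝ} {c C : ℝ} (hF : Integrable F ν) (hG : Integrable G ν)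
    (hFG : ∀ᵐ z ∂ν, |F z - G z - c| ≤ C) : |∫ z, F z ∂ν - ∫ z, G z ∂ν - c| ≤ C := by
  have h := norm_integral_le_of_norm_le_const (f := fun z => F z - G z - c) hFG
  have hc : ∫ _, c ∂ν = c := by simp
  have hsub : ∫ z, F z - G z - c ∂ν = ∫ z, F z ∂ν - ∫ z, G z ∂ν - c := by
    rw [integral_sub (f := fun z => F z - G z) (hF.sub hG) (integrable_const c),
      integral_sub hF hG, hc]
  simpa [hsub] using h

variable {E : Type*} [NormedAddCommGroup E] [NormedSpace ℝ E]

theorem add_smul_mem_closedBall {x z : E} {R : ℝ} (hR : 0 ≤ R) (hz : z ∈ closedBall (0 : E) 1) :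
    x + R • z ∈ closedBall x R := by
  rw [mem_closedBall_iff_norm, add_sub_cancel_left, norm_smul, Real.norm_of_nonneg hR]
  exact mul_le_of_le_one_right hR (mem_closedBall_zero_iff.1 hz)

variable [FiniteDimensional ℝ E] [MeasurableSpace E] [BorelSpace E] (μ : Measure E)

/-- The fixed smooth bump on the unit ball that serves as the averaging kernel. -/
def mollifierBump : ContDiffBump (0 : E) where
  rIn := 1 / 2
  rOut := 1
  rIn_pos := by norm_num
  rIn_lt_rOut := by norm_num

/-- The probability measure on the unit ball whose density with respect to `μ` is the normalised
`mollifierBump`. -/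
def mollifierMeasure : Measure E :=
  μ.withDensity fun z => ENNReal.ofReal ((mollifierBump (E := E)).normed μ z)

theorem integral_mollifierMeasure (F : E → ℝ) :
    ∫ z, F z ∂mollifierMeasure μ = ∫ z, mollifierBump.normed μ z * F z ∂μ := by
  have hmeas : Measurable fun z => ENNReal.ofReal ((mollifierBump (E := E)).normed μ z) :=
    (ContDiffBump.continuous_normed _).measurable.ennreal_ofReal
  rw [mollifierMeasure, integral_withDensity_eq_integral_toReal_smul hmeas (by simp)]
  simp only [ENNReal.toReal_ofReal (ContDiffBump.nonneg_normed _ _), smul_eq_mul]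

variable [μ.IsAddHaarMeasure]

instance : IsProbabilityMeasure (mollifierMeasure μ) where
  measure_univ := by
    rw [mollifierMeasure, withDensity_apply _ MeasurableSet.univ, Measure.restrict_univ,
      ← ofReal_integral_eq_lintegral_ofReal (ContDiffBump.integrable_normed _)
        (ae_of_all _ fun z => ContDiffBump.nonneg_normed _ z), ContDiffBump.integral_normed,
      ENNReal.ofReal_one]

theorem ae_mollifierMeasure_mem_closedBall : ∀ᵐ z ∂mollifierMeasure μ, z ∈ closedBall 0 1 := by
  have hmeas : Measurable fun z => ENNReal.ofReal ((mollifierBump (E := E)).normed μ z) :=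
    (ContDiffBump.continuous_normed _).measurable.ennreal_ofReal
  refine (ae_withDensity_iff hmeas).2 (ae_of_all _ fun z hz => ball_subset_closedBall ?_)
  have hsupp : z ∈ Function.support ((mollifierBump (E := E)).normed μ) := fun h => hz (by simp [h])
  rwa [ContDiffBump.support_normed_eq] at hsupp

theorem integrable_mollifierMeasure {F : E → ℝ} (hF : ContinuousOn F (closedBall 0 1)) :
    Integrable F (mollifierMeasure μ) := by
  rw [← Measure.restrict_eq_self_of_ae_mem (ae_mollifierMeasure_mem_closedBall μ)]
  exact hF.integrableOn_compact (isCompact_closedBall 0 1)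

/-- The average of `V` over the ball of radius `R` around `x`, weighted by `mollifierBump`. The
kernel lives on the fixed unit ball, so that `R` may vary with `x` and may be `0`. -/
def mollify (V : E → ℝ) (R : ℝ) (x : E) : ℝ :=
  ∫ z, V (x + R • z) ∂mollifierMeasure μ

@[simp]
theorem mollify_zero (V : E → ℝ) (x : E) : mollify μ V 0 x = V x := by
  simp [mollify]

theorem mollify_congr {V V' : E → ℝ} {x : E} {R : ℝ} (hR : 0 ≤ R)
    (hV : EqOn V V' (closedBall x R)) : mollify μ V R x = mollify μ V' R x :=
  integral_congr_ae <| (ae_mollifierMeasure_mem_closedBall μ).mono fun _ hz =>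
    hV (add_smul_mem_closedBall hR hz)

theorem abs_mollify_sub_mollify_sub_le {V : E → ℝ} {x y : E} {R S c C : ℝ} (hR : 0 ≤ R) (hS : 0 ≤ S)
    (hx : ContinuousOn V (closedBall x R)) (hy : ContinuousOn V (closedBall y S))
    (h : ∀ z ∈ closedBall (0 : E) 1, |V (x + R • z) - V (y + S • z) - c| ≤ C) :
    |mollify μ V R x - mollify μ V S y - c| ≤ C := by
  have hint : ∀ {x : E} {R : ℝ}, 0 ≤ R → ContinuousOn V (closedBall x R) →
      Integrable (fun z => V (x + R • z)) (mollifierMeasure μ) := fun hR hV =>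
    integrable_mollifierMeasure μ <| hV.comp (by fun_prop) fun _ => add_smul_mem_closedBall hR
  exact abs_integral_sub_integral_sub_le (hint hR hx) (hint hS hy)
    ((ae_mollifierMeasure_mem_closedBall μ).mono h)

theorem abs_mollify_sub_mollify_le {V : E → ℝ} {x : E} {R S T : ℝ} {K : NNReal}
    (hV : LipschitzOnWith K V (closedBall x T)) (hR : R ∈ Icc 0 T) (hS : S ∈ Icc 0 T) :
    |mollify μ V R x - mollify μ V S x| ≤ K * |R - S| := by
  have hcont : ∀ {R}, R ∈ Icc 0 T → ContinuousOn V (closedBall x R) := fun hR =>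
    hV.continuousOn.mono (closedBall_subset_closedBall hR.2)
  have hmem : ∀ {R z}, R ∈ Icc 0 T → z ∈ closedBall (0 : E) 1 → x + R • z ∈ closedBall x T :=
    fun hR hz => closedBall_subset_closedBall hR.2 (add_smul_mem_closedBall hR.1 hz)
  rw [← sub_zero (_ - _)]
  refine abs_mollify_sub_mollify_sub_le μ hR.1 hS.1 (hcont hR) (hcont hS) fun z hz => ?_
  calc |V (x + R • z) - V (x + S • z) - 0| = dist (V (x + R • z)) (V (x + S • z)) := by
        rw [sub_zero, Real.dist_eq]
    _ ≤ K * dist (x + R • z) (x + S • z) := hV.dist_le_mul _ (hmem hR hz) _ (hmem hS hz)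
    _ = K * (|R - S| * ‖z‖) := by
        rw [dist_add_left, dist_eq_norm, ← sub_smul, norm_smul, Real.norm_eq_abs]
    _ ≤ K * |R - S| := by
        gcongr
        exact mul_le_of_le_one_right (abs_nonneg _) (mem_closedBall_zero_iff.1 hz)

theorem abs_mollify_add_sub_mollify_sub_le {V : E → ℝ} {x w : E} {R S T c C : ℝ} {K : NNReal}
    (hV : LipschitzOnWith K V (closedBall (x + w) T)) (hV' : ContinuousOn V (closedBall x S))
    (hR : R ∈ Icc 0 T) (hS : S ∈ Icc 0 T)
    (hshift : ∀ y ∈ closedBall x S, |V (y + w) - V y - c| ≤ C) :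
    |mollify μ V R (x + w) - mollify μ V S x - c| ≤ K * |R - S| + C := by
  have hradius := abs_mollify_sub_mollify_le μ hV hR hS
  have htranslate : |mollify μ V S (x + w) - mollify μ V S x - c| ≤ C := by
    refine abs_mollify_sub_mollify_sub_le μ hS.1 hS.1
      (hV.continuousOn.mono (closedBall_subset_closedBall hS.2)) hV' fun z hz => ?_
    rw [add_right_comm]
    exact hshift _ (add_smul_mem_closedBall hS.1 hz)
  have hsum := abs_add_le (mollify μ V R (x + w) - mollify μ V S (x + w))
    (mollify μ V S (x + w) - mollify μ V S x - c)
  rw [← add_sub_assoc, sub_add_sub_cancel] at hsum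
  exact hsum.trans (add_le_add hradius htranslate)

theorem mollify_eq_convolution (V : E → ℝ) {R : ℝ} (hR : 0 < R) (x : E) :
    mollify μ V R x = convolution V
      (fun u => (R ^ finrank ℝ E)⁻¹ * mollifierBump.normed μ (R⁻¹ • u))
      (ContinuousLinearMap.mul ℝ ℝ) μ x := by
  have hscale := Measure.integral_comp_inv_smul_of_nonneg μ
    (fun z => mollifierBump.normed μ z * V (x + R • z)) hR.le
  have hk : ∀ s, mollifierBump.normed μ (-s) = mollifierBump.normed μ s :=
    fun s : E => ContDiffBump.normed_neg _ s
  simp only [smul_inv_smul₀ hR.ne', smul_eq_mul] at hscale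
  rw [mollify, integral_mollifierMeasure,
    (eq_inv_mul_iff_mul_eq₀ (pow_ne_zero (finrank ℝ E) hR.ne')).2 hscale.symm, ← integral_const_mul]
  refine Eq.trans ?_ (integral_add_left_eq_self _ x)
  simp only [ContinuousLinearMap.mul_apply', sub_add_cancel_left, smul_neg, hk]
  congr with s
  ring

theorem contDiffAt_mollify {V : E → ℝ} (hV : LocallyIntegrable V μ) {R : ℝ} (hR : 0 < R) (x : E) :
    ContDiffAt ℝ 1 (fun q : ℝ × E => mollify μ V q.1 q.2) (R, x) := by
  have hsupp : ∀ (p : ℝ) (u : E), p ∈ Ioo 0 (2 * R) → u ∉ closedBall (0 : E) (2 * R) →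
      (p ^ finrank ℝ E)⁻¹ * mollifierBump.normed μ (p⁻¹ • u) = 0 := fun p u hp hu => by
    have hnot : p⁻¹ • u ∉ Function.support ((mollifierBump (E := E)).normed μ) := by
      rw [ContDiffBump.support_normed_eq, mem_ball_zero_iff, norm_smul, norm_inv,
        Real.norm_of_nonneg hp.1.le, inv_mul_lt_iff₀ hp.1]
      rw [mem_closedBall_zero_iff] at hu
      exact not_lt.2 ((mul_one p).trans_le (hp.2.le.trans (not_le.1 hu).le))
    rw [Function.notMem_support.1 hnot, mul_zero]
  have hsmooth : ContDiffOn ℝ 1 (fun q : ℝ × E => (q.1 ^ finrank ℝ E)⁻¹ *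
      mollifierBump.normed μ (q.1⁻¹ • q.2)) (Ioo 0 (2 * R) ×ˢ univ) := by
    refine ((contDiffOn_fst.pow _).inv fun q hq => pow_ne_zero _ hq.1.1.ne').mul ?_
    exact (ContDiffBump.contDiff_normed _).comp_contDiffOn
      ((contDiffOn_fst.inv fun q hq => hq.1.1.ne').smul contDiffOn_snd)
  have hconv := contDiffOn_convolution_right_with_param (n := 1) (ContinuousLinearMap.mul ℝ ℝ)
    isOpen_Ioo (isCompact_closedBall (0 : E) (2 * R)) hsupp hV hsmooth
  have hmem : Ioo 0 (2 * R) ×ˢ univ ∈ 𝓝 (R, x) :=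
    (isOpen_Ioo.prod isOpen_univ).mem_nhds ⟨⟨hR, by linarith⟩, trivial⟩
  refine (hconv.contDiffAt hmem).congr_of_eventuallyEq ?_
  filter_upwards [hmem] with q hq using mollify_eq_convolution μ V hq.1.1 q.2

theorem contDiffAt_mollify_comp {V r : E → ℝ} {x : E} {R : ℝ} (hr : ContDiffAt ℝ 1 r x)
    (hpos : 0 < r x) (hrR : r x < R) (hV : ContinuousOn V (closedBall x R)) :
    ContDiffAt ℝ 1 (fun y => mollify μ V (r y) y) x := by
  set V' : E → ℝ := (closedBall x R).indicator V
  have hV' : LocallyIntegrable V' μ :=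
    ((hV.integrableOn_compact (isCompact_closedBall x R)).integrable_indicator
      isClosed_closedBall.measurableSet).locallyIntegrable
  have hcomp := (contDiffAt_mollify μ hV' hpos x).comp (f := fun y => (r y, y)) x
    (hr.prodMk contDiffAt_id)
  refine hcomp.congr_of_eventuallyEq ?_
  have hr_pos : ∀ᶠ y in 𝓝 x, 0 < r y := hr.continuousAt.eventually_const_lt hpos
  have hr_lt : ∀ᶠ y in 𝓝 x, r y + dist y x < R :=
    (hr.continuousAt.add (by fun_prop)).eventually_lt_const (by simpa using hrR)
  filter_upwards [hr_pos, hr_lt] with y hy₀ hyR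
  exact mollify_congr μ hy₀.le fun u hu =>
    (indicator_of_mem (closedBall_subset_closedBall' hyR.le hu) V).symm

end Mollify

section Smoothing

open Set Metric MeasureTheory Asymptotics

variable {E : Type*} [NormedAddCommGroup E] [NormedSpace ℝ E]

/-- `c` is the one-sided derivative of `V` at `x` in the direction `v`, uniformly in base points
tending to `x`. -/
def HasStrictDirDerivAt (V : E → ℝ) (c : ℝ) (v x : E) : Prop :=
  (fun q : ℝ × E => V (q.2 + q.1 • v) - V q.2 - q.1 * c) =o[𝓝[>] 0 ×ˢ 𝓝 x] Prod.fst

theorem HasStrictDirDerivAt.eventually_abs_sub_sub_le {V g : E → ℝ} {f : E → E} {x : E}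
    {K : NNReal} {s : Set E} (h : HasStrictDirDerivAt V (g x) (f x) x) (hs : s ∈ 𝓝 x)
    (hV : LipschitzOnWith K V s) (hf : ContinuousAt f x) (hg : ContinuousAt g x) {e : ℝ}
    (he : 0 < e) :
    ∀ᶠ q : ℝ × E × E in 𝓝[>] 0 ×ˢ 𝓝 x ×ˢ 𝓝 x,
      |V (q.2.2 + q.1 • f q.2.1) - V q.2.2 - q.1 * g q.2.1| ≤ e * q.1 := by
  have hh : Tendsto (fun q : ℝ × E × E => q.1) (𝓝[>] 0 ×ˢ 𝓝 x ×ˢ 𝓝 x) (𝓝 0) :=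
    tendsto_fst.mono_right nhdsWithin_le_nhds
  have hx' : Tendsto (fun q : ℝ × E × E => q.2.1) (𝓝[>] 0 ×ˢ 𝓝 x ×ˢ 𝓝 x) (𝓝 x) :=
    tendsto_fst.comp tendsto_snd
  have hy : Tendsto (fun q : ℝ × E × E => q.2.2) (𝓝[>] 0 ×ˢ 𝓝 x ×ˢ 𝓝 x) (𝓝 x) :=
    tendsto_snd.comp tendsto_snd
  have hf' : Tendsto (fun q : ℝ × E × E => f q.2.1) (𝓝[>] 0 ×ˢ 𝓝 x ×ˢ 𝓝 x) (𝓝 (f x)) :=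
    hf.tendsto.comp hx'
  have hmem : ∀ {w : ℝ × E × E → E} {v : E}, Tendsto w (𝓝[>] 0 ×ˢ 𝓝 x ×ˢ 𝓝 x) (𝓝 v) →
      ∀ᶠ q in 𝓝[>] 0 ×ˢ 𝓝 x ×ˢ 𝓝 x, q.2.2 + q.1 • w q ∈ s := fun hw => by
    have := hy.add (hh.smul hw)
    rw [zero_smul, add_zero] at this
    exact this hs
  have hdiff : Tendsto (fun q : ℝ × E × E => K * ‖f q.2.1 - f x‖ + |g q.2.1 - g x|)
      (𝓝[>] 0 ×ˢ 𝓝 x ×ˢ 𝓝 x) (𝓝 0) := by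
    simpa using ((hf'.sub_const (f x)).norm.const_mul (K : ℝ)).add
      ((hg.tendsto.comp hx').sub_const (g x)).abs
  filter_upwards [(tendsto_fst.prodMk hy).eventually (h.def (half_pos he)), hmem hf',
    hmem tendsto_const_nhds, hdiff.eventually_lt_const (half_pos he),
    tendsto_fst.eventually self_mem_nhdsWithin] with ⟨t, x', y⟩ hfix hm hm' hsmall (ht : 0 < t)
  simp only [Real.norm_eq_abs, abs_of_pos ht] at hfix hm hm' hsmall ⊢
  have hlip : |V (y + t • f x') - V (y + t • f x)| ≤ K * (t * ‖f x' - f x‖) := by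
    have := hV.dist_le_mul _ hm _ hm'
    rwa [Real.dist_eq, dist_add_left, dist_eq_norm, ← smul_sub, norm_smul,
      Real.norm_of_nonneg ht.le] at this
  calc |V (y + t • f x') - V y - t * g x'|
      = |(V (y + t • f x') - V (y + t • f x)) + (V (y + t • f x) - V y - t * g x)
          - t * (g x' - g x)| := by congr 1; ring
    _ ≤ K * (t * ‖f x' - f x‖) + e / 2 * t + t * |g x' - g x| := by
        refine (abs_sub _ _).trans (add_le_add ((abs_add_le _ _).trans (add_le_add hlip hfix)) ?_)
        rw [abs_mul, abs_of_pos ht]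
    _ ≤ e * t := by nlinarith

section Mollify

variable [FiniteDimensional ℝ E] [MeasurableSpace E] [BorelSpace E] (μ : Measure E)
  [μ.IsAddHaarMeasure] {V₀ r : E → ℝ} {x : E} {K : NNReal} {T : ℝ}

theorem contDiffAt_mollify_of_lipschitzOnWith (hr : ContDiffAt ℝ 1 r x) (hpos : 0 < r x)
    (hrT : r x < T) (hV : LipschitzOnWith K V₀ (ball x T)) :
    ContDiffAt ℝ 1 (fun y => mollify μ V₀ (r y) y) x := by
  obtain ⟨T', hrT', hT'⟩ := exists_between hrT
  exact contDiffAt_mollify_comp μ hr hpos hrT'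
    (hV.continuousOn.mono (closedBall_subset_ball hT'))

theorem abs_fderiv_mollify_apply_sub_le {v : E} {c e : ℝ} (hr : ContDiffAt ℝ 1 r x)
    (hpos : 0 < r x) (hrT : r x < T) (hV : LipschitzOnWith K V₀ (ball x T))
    (hdir : ∀ᶠ h in 𝓝[>] (0 : ℝ), ∀ y ∈ closedBall x (r x),
      |V₀ (y + h • v) - V₀ y - h * c| ≤ e * h) :
    |fderiv ℝ (fun y => mollify μ V₀ (r y) y) x v - c| ≤ K * |fderiv ℝ r x v| + e := by
  have hslope : ∀ {w : E → ℝ}, ContDiffAt ℝ 1 w x →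
      Tendsto (fun h : ℝ => h⁻¹ * (w (x + h • v) - w x)) (𝓝[>] 0) (𝓝 (fderiv ℝ w x v)) :=
    fun hw =>
      ((hw.differentiableAt one_ne_zero).hasFDerivAt.hasLineDerivAt v).tendsto_slope_zero_right
  obtain ⟨T', hrT', hT'⟩ := exists_between hrT
  have hline : Tendsto (fun h : ℝ => x + h • v) (𝓝[>] 0) (𝓝 x) :=
    tendsto_nhdsWithin_of_tendsto_nhds <| by
      simpa using (show Continuous fun h : ℝ => x + h • v by fun_prop).tendsto 0
  refine le_of_tendsto_of_tendsto
    ((hslope (contDiffAt_mollify_of_lipschitzOnWith μ hr hpos hrT hV)).sub_const c).abs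
    (((hslope hr).abs.const_mul (K : ℝ)).add_const e) ?_
  filter_upwards [hdir, self_mem_nhdsWithin,
    hline.eventually (hr.continuousAt.eventually_const_lt hpos),
    hline.eventually (hr.continuousAt.eventually_lt_const hrT'),
    hline.eventually (ball_mem_nhds x (sub_pos.2 hT'))] with h hdir_h (hh : 0 < h) hr_pos hr_lt
    hball
  have hsub : closedBall (x + h • v) T' ⊆ ball x T :=
    closedBall_subset_ball' (by linarith [mem_ball.1 hball])
  have hincr := abs_mollify_add_sub_mollify_sub_le μ (hV.mono hsub)
    (hV.continuousOn.mono (closedBall_subset_ball hrT)) ⟨hr_pos.le, hr_lt.le⟩ ⟨hpos.le, hrT'.le⟩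
    hdir_h
  calc |h⁻¹ * (mollify μ V₀ (r (x + h • v)) (x + h • v) - mollify μ V₀ (r x) x) - c|
      = h⁻¹ * |mollify μ V₀ (r (x + h • v)) (x + h • v) - mollify μ V₀ (r x) x - h * c| := by
        rw [← abs_of_pos (inv_pos.2 hh), ← abs_mul, abs_of_pos (inv_pos.2 hh),
          mul_sub _ _ (h * c), inv_mul_cancel_left₀ hh.ne']
    _ ≤ h⁻¹ * (K * |r (x + h • v) - r x| + e * h) := by gcongr
    _ = K * |h⁻¹ * (r (x + h • v) - r x)| + e := by
        rw [abs_mul, abs_of_pos (inv_pos.2 hh)]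
        field_simp

theorem norm_fderiv_mollify_le (hr : ContDiffAt ℝ 1 r x) (hpos : 0 < r x) (hrT : r x < T)
    (hV : LipschitzOnWith K V₀ (ball x T)) :
    ‖fderiv ℝ (fun y => mollify μ V₀ (r y) y) x‖ ≤ K * (‖fderiv ℝ r x‖ + 1) := by
  refine ContinuousLinearMap.opNorm_le_bound _ (by positivity) fun v => ?_
  have hball : ∀ᶠ h in 𝓝[>] (0 : ℝ), ‖h • v‖ < T - r x := by
    refine Tendsto.eventually_lt_const (sub_pos.2 hrT)
      (tendsto_nhdsWithin_of_tendsto_nhds ?_)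
    simpa using (show Continuous fun h : ℝ => ‖h • v‖ by fun_prop).tendsto 0
  have h := abs_fderiv_mollify_apply_sub_le μ (v := v) (c := 0) (e := K * ‖v‖) hr hpos hrT hV <| by
    filter_upwards [hball, self_mem_nhdsWithin] with h hh (hpos : 0 < h) y hy
    have hy' : y + h • v ∈ ball x T :=
      mem_ball.2 <| (dist_triangle _ y x).trans_lt <| by
        rw [dist_self_add_left]; linarith [mem_closedBall.1 hy]
    have := hV.dist_le_mul _ hy' _ (closedBall_subset_ball hrT hy)
    rw [Real.dist_eq, dist_self_add_left, norm_smul, Real.norm_of_nonneg hpos.le] at this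
    rw [mul_zero, sub_zero]
    linarith
  rw [sub_zero] at h
  calc _ ≤ K * |fderiv ℝ r x v| + K * ‖v‖ := h
    _ ≤ K * (‖fderiv ℝ r x‖ * ‖v‖) + K * ‖v‖ := by
      gcongr
      exact (fderiv ℝ r x).le_opNorm v
    _ = K * (‖fderiv ℝ r x‖ + 1) * ‖v‖ := by ring

end Mollify

section Exists

variable {V₀ g ε : E → ℝ} {f : E → E} {U : Set E}

/-- The radii `ρ` for which averaging `V₀` near `x` over radii in `(0, ρ]`, with slope at most `ρ`,
changes both `V₀` and its derivative `g x` in the direction `f x` by at most `ε x`. -/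
def IsSmoothingRadius (V₀ g ε : E → ℝ) (f : E → E) (x : E) (ρ : ℝ) : Prop :=
  ρ ≤ 1 ∧ ρ < ε x ∧ ∃ K : NNReal, LipschitzOnWith K V₀ (ball x (2 * ρ)) ∧
    K * ρ * (‖f x‖ + 1) ≤ ε x / 2 ∧
    ∀ᶠ h in 𝓝[>] (0 : ℝ), ∀ y ∈ closedBall x ρ, |V₀ (y + h • f x) - V₀ y - h * g x| ≤ ε x / 2 * h

theorem eventually_isSmoothingRadius (hU : IsOpen U) (hε : ContinuousOn ε U)
    (hpos : ∀ x ∈ U, 0 < ε x) (hf : ContinuousOn f U) (hg : ContinuousOn g U)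
    (hLip : LocallyLipschitzOn U V₀) (hdir : ∀ x ∈ U, HasStrictDirDerivAt V₀ (g x) (f x) x)
    {x : E} (hx : x ∈ U) :
    ∀ᶠ q : ℝ × E in 𝓝[>] 0 ×ˢ 𝓝[U] x, IsSmoothingRadius V₀ g ε f q.2 q.1 := by
  have hUx : 𝓝[U] x = 𝓝 x := hU.nhdsWithin_eq hx
  obtain ⟨K, s, hs, hK⟩ := hLip hx
  rw [hUx] at hs ⊢
  have hεx := hε.continuousAt (hU.mem_nhds hx)
  have hfx := hf.continuousAt (hU.mem_nhds hx)
  have hε2 : 0 < ε x / 2 := half_pos (hpos x hx)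
  obtain ⟨short, hshort, near, hnear, hstep⟩ := eventually_prod_iff.1 <|
    (hdir x hx).eventually_abs_sub_sub_le hs hK hfx (hg.continuousAt (hU.mem_nhds hx))
      (half_pos hε2)
  obtain ⟨nearParam, hnearParam, nearBase, hnearBase, hnear_of⟩ := eventually_prod_iff.1 hnear
  obtain ⟨a, ha, hball⟩ := Metric.mem_nhds_iff.1 (inter_mem hs hnearBase)
  have hρ : Tendsto (fun q : ℝ × E => q.1) (𝓝[>] 0 ×ˢ 𝓝 x) (𝓝 0) :=
    tendsto_fst.mono_right nhdsWithin_le_nhds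
  have hεx' : Tendsto (fun q : ℝ × E => ε q.2) (𝓝[>] 0 ×ˢ 𝓝 x) (𝓝 (ε x)) :=
    hεx.tendsto.comp tendsto_snd
  have hsmall : Tendsto (fun q : ℝ × E => K * q.1 * (‖f q.2‖ + 1)) (𝓝[>] 0 ×ˢ 𝓝 x) (𝓝 0) := by
    simpa using (hρ.const_mul (K : ℝ)).mul ((hfx.tendsto.comp tendsto_snd).norm.add_const 1)
  filter_upwards [hρ.eventually_lt_const zero_lt_one, hρ.eventually_lt_const hε2,
    hρ.eventually_lt_const (show 0 < a / 3 by positivity), hεx'.eventually_const_lt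
    (half_lt_self (hpos x hx)), hsmall.eventually_lt_const (half_pos hε2),
    tendsto_snd.eventually (ball_mem_nhds x (show 0 < a / 3 by positivity)),
    tendsto_snd.eventually hnearParam]
    with ⟨ρ, x'⟩ hρ1 hρε hρa hε' hKρ (hx' : dist x' x < a / 3) hparam
  refine ⟨hρ1.le, hρε.trans hε', K, hK.mono fun y hy => (hball ?_).1, by linarith, ?_⟩
  · exact ball_subset_ball' (by linarith) hy
  · filter_upwards [hshort, self_mem_nhdsWithin] with h hh (hh_pos : 0 < h) y hy
    have hbase : nearBase y := (hball (closedBall_subset_ball' (by linarith) hy)).2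
    exact (hstep hh (hnear_of hparam hbase)).trans (by gcongr)

variable [FiniteDimensional ℝ E]

theorem exists_contDiffOn_approx_fderiv_apply (hU : IsOpen U) (hε : ContinuousOn ε U)
    (hpos : ∀ x ∈ U, 0 < ε x) (hf : ContinuousOn f U) (hg : ContinuousOn g U)
    (hLip : LocallyLipschitzOn U V₀) (hdir : ∀ x ∈ U, HasStrictDirDerivAt V₀ (g x) (f x) x) :
    ∃ V : E → ℝ, ContDiffOn ℝ 1 V U ∧ (∀ x ∉ U, V x = V₀ x) ∧ ∀ x ∈ U, |V x - V₀ x| ≤ ε x ∧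
      |fderiv ℝ V x (f x) - g x| ≤ ε x ∧
      ∀ K : NNReal, LipschitzOnWith K V₀ (ball x (ε x)) → ‖fderiv ℝ V x‖ ≤ 2 * K := by
  borelize E
  obtain ⟨ρ, hρ, hρpos, hρs⟩ := exists_continuousOn_pos_of_eventually fun x hx =>
    eventually_isSmoothingRadius hU hε hpos hf hg hLip hdir hx
  obtain ⟨r, hr, hr0, hrρ⟩ := exists_contDiff_one_norm_fderiv_le hU hρ hρpos
  refine ⟨fun x => mollify Measure.addHaar V₀ (r x) x, fun x hx => ?_, fun x hx => ?_,
    fun x hx => ?_⟩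
  · obtain ⟨hrpos, hrle, -⟩ := hrρ x hx
    obtain ⟨-, -, K, hK, -⟩ := hρs x hx (ρ x) ⟨hρpos x hx, le_rfl⟩
    exact (contDiffAt_mollify_of_lipschitzOnWith _ hr.contDiffAt hrpos
      (by linarith) hK).contDiffWithinAt
  · simp only [hr0 x hx, mollify_zero]
  · obtain ⟨hrpos, hrle, hDr⟩ := hrρ x hx
    obtain ⟨hρ1, hρε, K, hK, hKρ, hstep⟩ := hρs x hx (ρ x) ⟨hρpos x hx, le_rfl⟩
    refine ⟨?_, ?_, fun K' hK' => ?_⟩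
    · have h := abs_mollify_sub_mollify_le Measure.addHaar
        (hK.mono (closedBall_subset_ball (by linarith [hρpos x hx])))
        ⟨hrpos.le, hrle⟩ ⟨le_rfl, (hρpos x hx).le⟩
      rw [mollify_zero, sub_zero, abs_of_pos hrpos] at h
      have : K * r x ≤ K * ρ x * (‖f x‖ + 1) := by
        rw [mul_assoc]
        gcongr
        exact hrle.trans (le_mul_of_one_le_right (hρpos x hx).le (by simp))
      linarith [hpos x hx]
    · have h := abs_fderiv_mollify_apply_sub_le Measure.addHaar hr.contDiffAt hrpos
        (by linarith) hK (hstep.mono fun h hh y hy => hh y (closedBall_subset_closedBall hrle hy))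
      have : K * |fderiv ℝ r x (f x)| ≤ K * ρ x * (‖f x‖ + 1) := by
        rw [mul_assoc]
        gcongr
        exact ((fderiv ℝ r x).le_of_opNorm_le hDr _).trans
          (mul_le_mul_of_nonneg_left (by simp) (hρpos x hx).le)
      linarith
    · refine (norm_fderiv_mollify_le Measure.addHaar hr.contDiffAt hrpos
        (hrle.trans_lt hρε) hK').trans ?_
      rw [mul_comm]
      gcongr
      linarith

end Exists

end Smoothing

section Flow

open Set Metric Asymptotics

variable {E : Type*} [NormedAddCommGroup E]

/-- The set of points attracted to `x₀` by the forward flow `φ`. -/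
def regionOfAttraction (φ : ℝ → E → E) (x₀ : E) : Set E :=
  {x | Tendsto (fun t => φ t x) atTop (𝓝 x₀)}

/-- Local exponential stability of `x₀` for the forward flow `φ`. -/
def IsLocallyExpStable (φ : ℝ → E → E) (x₀ : E) : Prop :=
  ∃ δ > (0 : ℝ), ∃ M > (0 : ℝ), ∃ c > (0 : ℝ), ∀ x : E,
    ‖x - x₀‖ ≤ δ → ∀ t ≥ (0 : ℝ), ‖φ t x - x₀‖ ≤ M * ‖x - x₀‖ * Real.exp (-c * t)

theorem exists_flow_mem_of_mem_regionOfAttraction {φ : ℝ → E → E} {x x₀ : E} {s : Set E}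
    (hx : x ∈ regionOfAttraction φ x₀) (hs : s ∈ 𝓝 x₀) : ∃ T : ℝ, 0 ≤ T ∧ φ T x ∈ s :=
  ((eventually_ge_atTop 0).and (hx hs)).exists

variable [NormedSpace ℝ E]

/-- `φ` is a forward flow of the autonomous equation `ẋ = f x`. The times are all of `ℝ`, but
nothing is required of `φ t` for `t < 0`. -/
structure IsForwardFlow (f : E → E) (φ : ℝ → E → E) : Prop where
  zero : ∀ x, φ 0 x = x
  hasDerivWithinAt : ∀ x, ∀ t ≥ (0 : ℝ),
    HasDerivWithinAt (fun s => φ s x) (f (φ t x)) (Ici 0) t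
  add : ∀ x, ∀ s ≥ (0 : ℝ), ∀ t ≥ (0 : ℝ), φ s (φ t x) = φ (t + s) x

namespace IsForwardFlow

variable {f : E → E} {φ : ℝ → E → E} {x x₀ y : E} {T t : ℝ}

theorem continuousOn (hφ : IsForwardFlow f φ) (x : E) : ContinuousOn (fun t => φ t x) (Ici 0) :=
  fun t ht => (hφ.hasDerivWithinAt x t ht).continuousWithinAt

theorem dist_le {s : Set E} {K : NNReal} (hφ : IsForwardFlow f φ) (hK : LipschitzOnWith K f s)
    (hx : ∀ t ∈ Ico 0 T, φ t x ∈ s) (hy : ∀ t ∈ Ico 0 T, φ t y ∈ s) (ht : t ∈ Icc 0 T) :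
    dist (φ t x) (φ t y) ≤ dist x y * Real.exp (K * t) := by
  have hderiv z (r : ℝ) (hr : r ∈ Ico 0 T) :
      HasDerivWithinAt (fun s => φ s z) (f (φ r z)) (Ici r) r :=
    (hφ.hasDerivWithinAt z r hr.1).mono (Ici_subset_Ici.2 hr.1)
  have hcont z : ContinuousOn (fun s => φ s z) (Icc 0 T) :=
    (hφ.continuousOn z).mono Icc_subset_Ici_self
  simpa using dist_le_of_trajectories_ODE_of_mem (v := fun _ => f) (s := fun _ => s)
    (fun _ _ => hK) (hcont x) (hderiv x) hx (hcont y) (hderiv y) hy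
    (by simp only [hφ.zero, le_refl]) t ht

theorem mem_closedBall_of_dist_mul_exp_lt {K : NNReal} {R : ℝ} (hφ : IsForwardFlow f φ)
    (hK : LipschitzOnWith K f (closedBall x₀ (R + 1)))
    (hx : ∀ t ∈ Icc 0 T, φ t x ∈ closedBall x₀ R)
    (hxy : dist y x * Real.exp (K * T) < 1) (ht : t ∈ Icc 0 T) :
    φ t y ∈ closedBall x₀ (R + 1) := by
  have hball : closedBall x₀ R ⊆ closedBall x₀ (R + 1) := closedBall_subset_closedBall (by simp)
  have hlt (r : ℝ) (hr : r ∈ Icc 0 T) (h : ∀ s ∈ Ico 0 r, φ s y ∈ closedBall x₀ (R + 1)) :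
      φ r y ∈ ball x₀ (R + 1) := by
    have hd := hφ.dist_le hK h
      (fun s hs => hball (hx s ⟨hs.1, hs.2.le.trans hr.2⟩)) (right_mem_Icc.2 hr.1)
    have he : dist y x * Real.exp (K * r) ≤ dist y x * Real.exp (K * T) := by
      gcongr
      exact hr.2
    have hxr := mem_closedBall.1 (hx r hr)
    exact mem_ball.2 (by linarith [dist_triangle (φ r y) (φ r x) x₀])
  refine IsClosed.Icc_subset_of_forall_mem_nhdsGT_of_Icc_subset
    (s := {r | φ r y ∈ closedBall x₀ (R + 1)}) ?_ ?_ ?_ ht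
  · rw [inter_comm]
    exact ((hφ.continuousOn y).mono Icc_subset_Ici_self).preimage_isClosed_of_isClosed isClosed_Icc
      isClosed_closedBall
  · exact ball_subset_closedBall (hlt 0 ⟨le_rfl, ht.1.trans ht.2⟩ (by simp))
  · intro r hr hstay
    have hc : ContinuousWithinAt (fun s => φ s y) (Ioi r) r :=
      (hφ.continuousOn y r hr.1).mono fun s hs => hr.1.trans (le_of_lt hs)
    filter_upwards [hc.eventually (isOpen_ball.mem_nhds
      (hlt r ⟨hr.1, hr.2.le⟩ fun s hs => hstay ⟨hs.1, hs.2.le⟩))] with s hs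
    exact ball_subset_closedBall hs

theorem exists_lipschitzOnWith_mapsTo_closedBall [ProperSpace E] (hφ : IsForwardFlow f φ)
    (hf : LocallyLipschitz f) (x : E) (T : ℝ) :
    ∃ K : NNReal, ∃ R : ℝ, ∃ s ∈ 𝓝 x, ∀ t ∈ Icc 0 T,
      LipschitzOnWith K (φ t) s ∧ MapsTo (φ t) s (closedBall x R) := by
  obtain ⟨R, hR⟩ := (isCompact_Icc.image_of_continuousOn
    ((hφ.continuousOn x).mono Icc_subset_Ici_self) : IsCompact ((φ · x) '' Icc 0 T)).isBounded
    |>.subset_closedBall x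
  obtain ⟨K, hK⟩ := LocallyLipschitzOn.exists_lipschitzOnWith_of_compact
    (isCompact_closedBall x (R + 1)) (hf.locallyLipschitzOn (s := closedBall x (R + 1)))
  have hstay {y : E} (hy : y ∈ ball x (Real.exp (-(K * T)))) (t : ℝ) (ht : t ∈ Icc 0 T) :
      φ t y ∈ closedBall x (R + 1) := by
    refine hφ.mem_closedBall_of_dist_mul_exp_lt hK (fun r hr => hR ⟨r, hr, rfl⟩) ?_ ht
    rwa [mem_ball, Real.exp_neg, ← one_div, lt_div_iff₀ (Real.exp_pos _)] at hy
  refine ⟨⟨Real.exp (K * T), (Real.exp_pos _).le⟩, R + 1, _,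
    ball_mem_nhds x (Real.exp_pos (-(K * T))), fun t ht =>
      ⟨LipschitzOnWith.of_dist_le_mul fun y hy z hz => ?_, fun y hy => hstay hy t ht⟩⟩
  calc dist (φ t y) (φ t z) ≤ dist y z * Real.exp (K * t) :=
        hφ.dist_le hK (fun r hr => hstay hy r ⟨hr.1, hr.2.le⟩)
          (fun r hr => hstay hz r ⟨hr.1, hr.2.le⟩) ht
    _ ≤ dist y z * Real.exp (K * T) := by
        gcongr
        exact ht.2
    _ = Real.exp (K * T) * dist y z := mul_comm _ _

theorem tendsto_nhdsGE_zero_prod_nhds [ProperSpace E] (hφ : IsForwardFlow f φ)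
    (hf : LocallyLipschitz f) (x : E) :
    Tendsto (fun q : ℝ × E => φ q.1 q.2) (𝓝[≥] 0 ×ˢ 𝓝 x) (𝓝 x) := by
  obtain ⟨K, _, s, hs, hK⟩ := hφ.exists_lipschitzOnWith_mapsTo_closedBall hf x 1
  have hcont : ContinuousOn (fun q : ℝ × E => φ q.1 q.2) (Icc 0 1 ×ˢ s) :=
    continuousOn_prod_of_continuousOn_lipschitzOnWith' _ K (fun t ht => (hK t ht).1) fun y _ =>
      (hφ.continuousOn y).mono Icc_subset_Ici_self
  have h := hcont (0, x) ⟨left_mem_Icc.2 zero_le_one, mem_of_mem_nhds hs⟩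
  rwa [ContinuousWithinAt, nhdsWithin_prod_eq, nhdsWithin_eq_nhds.2 hs,
    nhdsWithin_Icc_eq_nhdsGE zero_lt_one, hφ.zero] at h

theorem eventually_forall_mem_Icc [ProperSpace E] (hφ : IsForwardFlow f φ)
    (hf : LocallyLipschitz f) {P : E → Prop} (hP : ∀ᶠ y in 𝓝 x, P y) :
    ∀ᶠ q : ℝ × E in 𝓝[>] 0 ×ˢ 𝓝 x, ∀ t ∈ Icc 0 q.1, P (φ t q.2) := by
  obtain ⟨u, hu, s, hs, hus⟩ :=
    mem_prod_iff.1 ((hφ.tendsto_nhdsGE_zero_prod_nhds hf x).eventually hP)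
  obtain ⟨ρ, hρ, hρu⟩ := mem_nhdsGE_iff_exists_Ico_subset.1 hu
  filter_upwards [prod_mem_prod (Ioo_mem_nhdsGT hρ) hs] with q hq t ht
  exact hus (mk_mem_prod (hρu ⟨ht.1, ht.2.trans_lt hq.1.2⟩) hq.2)

theorem isLittleO_sub_sub_smul [ProperSpace E] (hφ : IsForwardFlow f φ) (hf : LocallyLipschitz f)
    (x : E) :
    (fun q : ℝ × E => φ q.1 q.2 - q.2 - q.1 • f x) =o[𝓝[>] 0 ×ˢ 𝓝 x] Prod.fst := by
  refine isLittleO_iff.2 fun c hc => ?_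
  have hpos : ∀ᶠ q : ℝ × E in 𝓝[>] 0 ×ˢ 𝓝 x, 0 < q.1 :=
    tendsto_fst.eventually self_mem_nhdsWithin
  filter_upwards [hpos, hφ.eventually_forall_mem_Icc hf
    (hf.continuous.continuousAt (closedBall_mem_nhds (f x) hc))] with ⟨h, y⟩ hh hclose
  have hbound := norm_image_sub_le_of_norm_deriv_le_segment' (a := 0) (b := h) (C := c)
    (f := fun t => φ t y - t • f x) (f' := fun t => f (φ t y) - f x)
    (fun t ht => ((hφ.hasDerivWithinAt y t ht.1).mono Icc_subset_Ici_self).sub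
      (by simpa using ((hasDerivAt_id t).smul_const (f x)).hasDerivWithinAt))
    (fun t ht => by simpa only [dist_eq_norm] using mem_closedBall.1 (hclose t ⟨ht.1, ht.2.le⟩))
    h (right_mem_Icc.2 hh.le)
  rw [Real.norm_of_nonneg hh.le, sub_right_comm]
  simpa [hφ.zero] using hbound

theorem flow_mem_regionOfAttraction_iff (hφ : IsForwardFlow f φ) (hT : 0 ≤ T) :
    φ T x ∈ regionOfAttraction φ x₀ ↔ x ∈ regionOfAttraction φ x₀ := by
  have heq : (fun t => φ t (φ T x)) =ᶠ[atTop] fun t => φ (T + t) x := by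
    filter_upwards [eventually_ge_atTop 0] with t ht using hφ.add x t ht T hT
  rw [regionOfAttraction, mem_ofPred_eq, mem_ofPred_eq, tendsto_congr' heq]
  exact ⟨fun h => by
      simpa [Function.comp_def] using h.comp (tendsto_atTop_add_const_left _ (-T) tendsto_id),
    fun h => h.comp (tendsto_atTop_add_const_left _ T tendsto_id)⟩

end IsForwardFlow

end Flow

section Cost

open Set Metric MeasureTheory Asymptotics
open scoped NNReal

theorem lipschitzOnWith_norm_sub_pow {X E : Type*} [PseudoMetricSpace X] [SeminormedAddCommGroup E]
    {s : Set X} {g : X → E} {K B : ℝ≥0} {e : E} (hg : LipschitzOnWith K g s)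
    (hB : ∀ x ∈ s, ‖g x - e‖ ≤ B) (p : ℕ) :
    LipschitzOnWith (p * B ^ (p - 1) * K) (fun x => ‖g x - e‖ ^ p) s := by
  refine LipschitzOnWith.of_dist_le_mul fun x hx y hy => ?_
  calc |‖g x - e‖ ^ p - ‖g y - e‖ ^ p| ≤ p * B ^ (p - 1) * ‖g x - g y‖ := by
        simpa only [sub_sub_sub_cancel_right] using
          abs_norm_pow_sub_norm_pow_le (hB x hx) (hB y hy) p
    _ ≤ p * B ^ (p - 1) * (K * dist x y) := by
        gcongr
        exact dist_eq_norm (g x) (g y) ▸ hg.dist_le_mul x hx y hy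
    _ = ↑(p * B ^ (p - 1) * K) * dist x y := by
        push_cast
        ring

theorem pow_mul_exp_le_mul_exp_neg {A K c t : ℝ} {N : ℕ} (hA : 0 ≤ A) (hA' : A ≤ 1) (hc : 0 ≤ c)
    (hN : K + 1 ≤ N * c) (ht : 0 ≤ t) :
    (A * Real.exp (-c * t)) ^ (N + 1) * Real.exp (K * t) ≤ A * Real.exp (-t) := by
  rw [mul_pow, ← Real.exp_nat_mul, mul_assoc, ← Real.exp_add]
  gcongr
  · exact pow_le_of_le_one hA hA' N.succ_ne_zero
  · push_cast
    nlinarith [mul_nonneg hc ht, mul_le_mul_of_nonneg_right hN ht]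

theorem tendsto_mul_exp_neg_mul_atTop_nhds_zero {c : ℝ} (hc : 0 < c) (A : ℝ) :
    Tendsto (fun t => A * Real.exp (-c * t)) atTop (𝓝 0) := by
  simpa using (Real.tendsto_exp_atBot.comp
    (tendsto_id.const_mul_atTop_of_neg (neg_neg_of_pos hc))).const_mul A

variable {E : Type*} [NormedAddCommGroup E]

theorem integrableOn_norm_pow_of_norm_le_mul_exp {γ : ℝ → E} (hγ : ContinuousOn γ (Ici 0))
    {A c : ℝ} (hc : 0 < c) (hbound : ∀ t ≥ 0, ‖γ t‖ ≤ A * Real.exp (-c * t)) {p : ℕ} (hp : p ≠ 0) :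
    IntegrableOn (fun t => ‖γ t‖ ^ p) (Ioi 0) := by
  have hp' : (0 : ℝ) < p := by positivity
  refine ((exp_neg_integrableOn_Ioi 0 (mul_pos hp' hc)).const_mul (A ^ p)).mono'
    (((hγ.norm.pow p).mono Ioi_subset_Ici_self).aestronglyMeasurable measurableSet_Ioi) ?_
  filter_upwards [ae_restrict_mem measurableSet_Ioi] with t ht
  rw [Real.norm_of_nonneg (by positivity)]
  calc ‖γ t‖ ^ p ≤ (A * Real.exp (-c * t)) ^ p := by
        gcongr
        exact hbound t (le_of_lt ht)
    _ = A ^ p * Real.exp (-(p * c) * t) := by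
        rw [mul_pow, ← Real.exp_nat_mul]
        ring_nf

/-- The cost `∫₀^∞ ‖φ t x - x₀‖ᵖ dt` of steering `x` to `x₀` along the flow `φ`, from which the
Lyapunov function is built. It takes the junk value `0` where the integral diverges. -/
def trajectoryCost (φ : ℝ → E → E) (x₀ : E) (p : ℕ) (x : E) : ℝ :=
  ∫ t in Ioi 0, ‖φ t x - x₀‖ ^ p

theorem trajectoryCost_nonneg (φ : ℝ → E → E) (x₀ : E) (p : ℕ) (x : E) :
    0 ≤ trajectoryCost φ x₀ p x :=
  setIntegral_nonneg measurableSet_Ioi fun _ _ => by positivity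

/-- The `p`-th power trajectory cost is finite on the `δ`-ball around the fixed point `x₀`, all of
which is attracted to `x₀`, and has Lipschitz constant `C * s` on the smaller `s`-balls: it is
flat at `x₀` like a quadratic function. -/
structure IsCostRegularNear (φ : ℝ → E → E) (x₀ : E) (p : ℕ) (δ C : ℝ≥0) : Prop where
  ne_zero : p ≠ 0
  pos : 0 < δ
  flow_self : ∀ t ≥ (0 : ℝ), φ t x₀ = x₀
  closedBall_subset : closedBall x₀ δ ⊆ regionOfAttraction φ x₀
  integrableOn : ∀ x ∈ closedBall x₀ δ, IntegrableOn (fun t => ‖φ t x - x₀‖ ^ p) (Ioi 0)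
  lipschitzOnWith : ∀ s ≤ δ,
    LipschitzOnWith (C * s) (trajectoryCost φ x₀ p) (closedBall x₀ s)

theorem IsCostRegularNear.trajectoryCost_self {φ : ℝ → E → E} {x₀ : E} {p : ℕ} {δ C : ℝ≥0}
    (hreg : IsCostRegularNear φ x₀ p δ C) : trajectoryCost φ x₀ p x₀ = 0 := by
  rw [trajectoryCost]
  refine setIntegral_eq_zero_of_forall_eq_zero fun t ht => ?_
  rw [hreg.flow_self t (le_of_lt ht), sub_self, norm_zero, zero_pow hreg.ne_zero]

theorem IsLocallyExpStable.exists_norm_flow_sub_le {φ : ℝ → E → E} {x₀ : E}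
    (h : IsLocallyExpStable φ x₀) :
    ∃ δ M : ℝ≥0, ∃ c > (0 : ℝ), 0 < δ ∧ M * δ ≤ 1 ∧ ∀ s ≤ δ, ∀ x ∈ closedBall x₀ s, ∀ t ≥ (0 : ℝ),
      ‖φ t x - x₀‖ ≤ ↑(M * s) * Real.exp (-c * t) := by
  obtain ⟨δ, hδ, M, hM, c, hc, hstab⟩ := h
  lift δ to ℝ≥0 using hδ.le
  lift M to ℝ≥0 using hM.le
  norm_cast at hδ hM
  refine ⟨min δ M⁻¹, M, c, hc, lt_min hδ (inv_pos.2 hM), ?_, fun s hs x hx t ht => ?_⟩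
  · calc M * min δ M⁻¹ ≤ M * M⁻¹ := by gcongr; exact min_le_right _ _
      _ = 1 := mul_inv_cancel₀ hM.ne'
  · rw [mem_closedBall, dist_eq_norm] at hx
    have hsδ : (s : ℝ) ≤ δ := NNReal.coe_le_coe.2 (hs.trans (min_le_left _ _))
    refine (hstab x (hx.trans hsδ) t ht).trans ?_
    push_cast
    gcongr

variable [NormedSpace ℝ E] {f : E → E} {φ : ℝ → E → E} {x₀ x y : E} {p : ℕ} {δ C : ℝ≥0} {T : ℝ}

namespace IsForwardFlow

/- Nearby trajectories separate at most like `exp (K t)`, while the derivative of `‖·‖ᵖ` decays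
like `exp (-c (p - 1) t)` along them; a large `p` makes the product integrable. -/
theorem abs_norm_flow_sub_pow_sub_le {K : ℝ≥0} {A c t : ℝ} {N : ℕ} (hφ : IsForwardFlow f φ)
    (hK : LipschitzOnWith K f (closedBall x₀ 1)) (hA : 0 ≤ A) (hA' : A ≤ 1)
    (hc : 0 ≤ c) (hN : K + 1 ≤ N * c)
    (hx : ∀ t ≥ (0 : ℝ), ‖φ t x - x₀‖ ≤ A * Real.exp (-c * t))
    (hy : ∀ t ≥ (0 : ℝ), ‖φ t y - x₀‖ ≤ A * Real.exp (-c * t)) (ht : 0 ≤ t) :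
    |‖φ t x - x₀‖ ^ (N + 2) - ‖φ t y - x₀‖ ^ (N + 2)| ≤
      ↑(N + 2) * A * dist x y * Real.exp (-t) := by
  have hmem {z : E} (hz : ∀ t ≥ (0 : ℝ), ‖φ t z - x₀‖ ≤ A * Real.exp (-c * t)) (r : ℝ)
      (hr : 0 ≤ r) : φ r z ∈ closedBall x₀ 1 := by
    rw [mem_closedBall, dist_eq_norm]
    exact (hz r hr).trans (mul_le_one₀ hA' (Real.exp_pos _).le
      (Real.exp_le_one_iff.2 (by nlinarith)))
  have hdist := hφ.dist_le hK (fun r hr => hmem hx r hr.1) (fun r hr => hmem hy r hr.1)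
    (right_mem_Icc.2 ht)
  calc |‖φ t x - x₀‖ ^ (N + 2) - ‖φ t y - x₀‖ ^ (N + 2)|
      ≤ ↑(N + 2) * (A * Real.exp (-c * t)) ^ (N + 1) * dist (φ t x) (φ t y) := by
        simpa only [sub_sub_sub_cancel_right, ← dist_eq_norm (φ t x), Nat.reduceSubDiff] using
          abs_norm_pow_sub_norm_pow_le (hx t ht) (hy t ht) (N + 2)
    _ ≤ ↑(N + 2) * (A * Real.exp (-c * t)) ^ (N + 1) * (dist x y * Real.exp (K * t)) := by gcongr
    _ = ↑(N + 2) * dist x y * ((A * Real.exp (-c * t)) ^ (N + 1) * Real.exp (K * t)) := by ring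
    _ ≤ ↑(N + 2) * dist x y * (A * Real.exp (-t)) := by
        gcongr ?_ * ?_
        exact pow_mul_exp_le_mul_exp_neg hA hA' hc hN ht
    _ = ↑(N + 2) * A * dist x y * Real.exp (-t) := by ring

theorem exists_isCostRegularNear [ProperSpace E] (hφ : IsForwardFlow f φ) (hf : LocallyLipschitz f)
    (hstab : IsLocallyExpStable φ x₀) : ∃ p δ C, IsCostRegularNear φ x₀ p δ C := by
  obtain ⟨δ, M, c, hc, hδ, hMδ, hdecay⟩ := hstab.exists_norm_flow_sub_le
  obtain ⟨K, hK⟩ := LocallyLipschitzOn.exists_lipschitzOnWith_of_compact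
    (isCompact_closedBall x₀ 1) (hf.locallyLipschitzOn (s := closedBall x₀ 1))
  obtain ⟨N, hN⟩ := exists_nat_ge ((K + 1) / c)
  rw [div_le_iff₀ hc] at hN
  have hint : ∀ x ∈ closedBall x₀ δ, IntegrableOn (fun t => ‖φ t x - x₀‖ ^ (N + 2)) (Ioi 0) :=
    fun x hx => integrableOn_norm_pow_of_norm_le_mul_exp
      ((hφ.continuousOn x).sub continuousOn_const) hc (hdecay δ le_rfl x hx) (by simp)
  refine ⟨N + 2, δ, ↑(N + 2) * M, by simp, hδ, fun t ht => ?_, fun x hx => ?_, hint,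
    fun s hs => LipschitzOnWith.of_dist_le_mul fun x hx y hy => ?_⟩
  · simpa [sub_eq_zero] using hdecay 0 zero_le x₀ (by simp) t ht
  · refine tendsto_iff_norm_sub_tendsto_zero.2 (squeeze_zero' (.of_forall fun t => norm_nonneg _)
      ?_ (tendsto_mul_exp_neg_mul_atTop_nhds_zero hc ↑(M * δ)))
    filter_upwards [eventually_ge_atTop 0] with t ht using hdecay δ le_rfl x hx t ht
  · have hsub : closedBall x₀ s ⊆ closedBall x₀ δ :=
      closedBall_subset_closedBall (NNReal.coe_le_coe.2 hs)
    have hMs : M * s ≤ 1 := (mul_le_mul_right hs M).trans hMδ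
    rw [trajectoryCost, trajectoryCost, dist_eq_norm,
      ← integral_sub (hint x (hsub hx)) (hint y (hsub hy))]
    calc ‖∫ t in Ioi 0, (‖φ t x - x₀‖ ^ (N + 2) - ‖φ t y - x₀‖ ^ (N + 2))‖
        ≤ ∫ t in Ioi 0, ↑(N + 2) * ↑(M * s) * dist x y * Real.exp (-t) := by
          refine norm_integral_le_of_norm_le ((integrableOn_exp_neg_Ioi 0).const_mul _) ?_
          filter_upwards [ae_restrict_mem measurableSet_Ioi] with t ht
          exact hφ.abs_norm_flow_sub_pow_sub_le hK (M * s).2 hMs hc.le hN (hdecay s hs x hx)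
            (hdecay s hs y hy) (le_of_lt ht)
      _ = ↑(↑(N + 2) * M * s) * dist x y := by
          rw [integral_const_mul, integral_exp_neg_Ioi_zero]
          push_cast
          ring

theorem continuousOn_norm_sub_pow (hφ : IsForwardFlow f φ) (x₀ : E) (p : ℕ) (x : E) :
    ContinuousOn (fun t => ‖φ t x - x₀‖ ^ p) (Ici 0) :=
  (((hφ.continuousOn x).sub continuousOn_const).norm).pow p

theorem intervalIntegrable_norm_sub_pow (hφ : IsForwardFlow f φ) (x₀ : E) (p : ℕ) (x : E)
    (hT : 0 ≤ T) : IntervalIntegrable (fun t => ‖φ t x - x₀‖ ^ p) volume 0 T :=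
  ((hφ.continuousOn_norm_sub_pow x₀ p x).mono Icc_subset_Ici_self).intervalIntegrable_of_Icc hT

theorem eqOn_norm_sub_pow (hφ : IsForwardFlow f φ) (x₀ : E) (p : ℕ) (x : E) (hT : 0 ≤ T) :
    EqOn (fun t => ‖φ t (φ T x) - x₀‖ ^ p) ((fun t => ‖φ t x - x₀‖ ^ p) ∘ (T + ·)) (Ioi 0) :=
  fun t ht => by simp only [hφ.add x t (le_of_lt ht) T hT, Function.comp_apply]

theorem integrableOn_Ioi_iff (hφ : IsForwardFlow f φ) (x₀ : E) (p : ℕ) (x : E) (hT : 0 ≤ T) :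
    IntegrableOn (fun t => ‖φ t (φ T x) - x₀‖ ^ p) (Ioi 0) ↔
      IntegrableOn (fun t => ‖φ t x - x₀‖ ^ p) (Ioi T) := by
  have hpre : (T + ·) ⁻¹' Ioi T = Ioi 0 := by rw [preimage_const_add_Ioi, sub_self]
  rw [integrableOn_congr_fun (hφ.eqOn_norm_sub_pow x₀ p x hT) measurableSet_Ioi, ← hpre]
  exact (measurePreserving_add_left volume T).integrableOn_comp_preimage
    (measurableEmbedding_addLeft T)

theorem trajectoryCost_flow (hφ : IsForwardFlow f φ) (x₀ : E) (p : ℕ) (x : E) (hT : 0 ≤ T) :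
    trajectoryCost φ x₀ p (φ T x) = ∫ t in Ioi T, ‖φ t x - x₀‖ ^ p := by
  have hpre : (T + ·) ⁻¹' Ioi T = Ioi 0 := by rw [preimage_const_add_Ioi, sub_self]
  rw [trajectoryCost, setIntegral_congr_fun measurableSet_Ioi (hφ.eqOn_norm_sub_pow x₀ p x hT),
    ← hpre]
  exact (measurePreserving_add_left volume T).setIntegral_preimage_emb
    (measurableEmbedding_addLeft T) (fun t => ‖φ t x - x₀‖ ^ p) (Ioi T)

end IsForwardFlow

namespace IsCostRegularNear

theorem mem_regionOfAttraction (hreg : IsCostRegularNear φ x₀ p δ C) (hφ : IsForwardFlow f φ)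
    (hT : 0 ≤ T) (hx : φ T x ∈ closedBall x₀ δ) : x ∈ regionOfAttraction φ x₀ :=
  (hφ.flow_mem_regionOfAttraction_iff hT).1 (hreg.closedBall_subset hx)

theorem integrableOn_Ioi (hreg : IsCostRegularNear φ x₀ p δ C) (hφ : IsForwardFlow f φ)
    (hx : x ∈ regionOfAttraction φ x₀) (hT : 0 ≤ T) :
    IntegrableOn (fun t => ‖φ t x - x₀‖ ^ p) (Ioi T) := by
  obtain ⟨S, hS, hSx⟩ := exists_flow_mem_of_mem_regionOfAttraction hx
    (closedBall_mem_nhds x₀ (NNReal.coe_pos.2 hreg.pos))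
  have htail := (hφ.integrableOn_Ioi_iff x₀ p x hS).1 (hreg.integrableOn _ hSx)
  have hhead := (intervalIntegrable_iff_integrableOn_Ioc_of_le hS).1
    (hφ.intervalIntegrable_norm_sub_pow x₀ p x hS)
  exact (Ioc_union_Ioi_eq_Ioi hS ▸ hhead.union htail).mono_set (Ioi_subset_Ioi hT)

theorem trajectoryCost_eq_integral_add (hreg : IsCostRegularNear φ x₀ p δ C)
    (hφ : IsForwardFlow f φ) (hx : x ∈ regionOfAttraction φ x₀) (hT : 0 ≤ T) :
    trajectoryCost φ x₀ p x =
      (∫ t in (0 : ℝ)..T, ‖φ t x - x₀‖ ^ p) + trajectoryCost φ x₀ p (φ T x) := by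
  rw [hφ.trajectoryCost_flow x₀ p x hT, trajectoryCost]
  exact (intervalIntegral.integral_interval_add_Ioi (hreg.integrableOn_Ioi hφ hx le_rfl)
    (hreg.integrableOn_Ioi hφ hx hT)).symm

theorem trajectoryCost_flow_le (hreg : IsCostRegularNear φ x₀ p δ C) (hφ : IsForwardFlow f φ)
    (hx : x ∈ regionOfAttraction φ x₀) (hT : 0 ≤ T) :
    trajectoryCost φ x₀ p (φ T x) ≤ trajectoryCost φ x₀ p x := by
  rw [hreg.trajectoryCost_eq_integral_add hφ hx hT]
  exact le_add_of_nonneg_left (intervalIntegral.integral_nonneg hT fun t _ => by positivity)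

theorem integral_le_trajectoryCost (hreg : IsCostRegularNear φ x₀ p δ C)
    (hφ : IsForwardFlow f φ) (hx : x ∈ regionOfAttraction φ x₀) (hT : 0 ≤ T) :
    ∫ t in (0 : ℝ)..T, ‖φ t x - x₀‖ ^ p ≤ trajectoryCost φ x₀ p x := by
  rw [hreg.trajectoryCost_eq_integral_add hφ hx hT]
  exact le_add_of_nonneg_right (trajectoryCost_nonneg φ x₀ p _)

theorem mul_le_trajectoryCost (hreg : IsCostRegularNear φ x₀ p δ C) (hφ : IsForwardFlow f φ)
    (hx : x ∈ regionOfAttraction φ x₀) {m : ℝ} (hT : 0 ≤ T)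
    (hm : ∀ t ∈ Icc 0 T, m ≤ ‖φ t x - x₀‖ ^ p) : T * m ≤ trajectoryCost φ x₀ p x := by
  refine le_trans ?_ (hreg.integral_le_trajectoryCost hφ hx hT)
  simpa using intervalIntegral.integral_mono_on hT intervalIntegrable_const
    (hφ.intervalIntegrable_norm_sub_pow x₀ p x hT) hm

theorem trajectoryCost_pos (hreg : IsCostRegularNear φ x₀ p δ C) (hφ : IsForwardFlow f φ)
    (hx : x ∈ regionOfAttraction φ x₀) (hne : x ≠ x₀) : 0 < trajectoryCost φ x₀ p x := by
  refine lt_of_lt_of_le ?_ (hreg.integral_le_trajectoryCost hφ hx zero_le_one)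
  refine intervalIntegral.integral_pos one_pos
    ((hφ.continuousOn_norm_sub_pow x₀ p x).mono Icc_subset_Ici_self) (fun t _ => by positivity)
    ⟨0, left_mem_Icc.2 zero_le_one, ?_⟩
  rw [hφ.zero]
  exact pow_pos (norm_pos_iff.2 (sub_ne_zero.2 hne)) p

theorem exists_lipschitzOnWith_trajectoryCost [ProperSpace E]
    (hreg : IsCostRegularNear φ x₀ p δ C) (hφ : IsForwardFlow f φ) (hf : LocallyLipschitz f)
    (hx : x ∈ regionOfAttraction φ x₀) :
    ∃ K : ℝ≥0, ∃ s ∈ 𝓝 x, s ⊆ regionOfAttraction φ x₀ ∧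
      LipschitzOnWith K (trajectoryCost φ x₀ p) s := by
  obtain ⟨T, hT, hTx⟩ :=
    exists_flow_mem_of_mem_regionOfAttraction hx (ball_mem_nhds x₀ (NNReal.coe_pos.2 hreg.pos))
  lift T to ℝ≥0 using hT
  obtain ⟨L, R, s, hs, hLs⟩ := hφ.exists_lipschitzOnWith_mapsTo_closedBall hf x T
  set B : ℝ≥0 := (R + dist x x₀).toNNReal
  have hend : T.1 ∈ Icc 0 (T : ℝ) := right_mem_Icc.2 T.2
  have hsT : s ∩ φ T ⁻¹' closedBall x₀ δ ∈ 𝓝 x :=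
    inter_mem hs (((hLs T hend).1.continuousOn.continuousAt hs) (mem_of_superset
      (isOpen_ball.mem_nhds hTx) ball_subset_closedBall))
  have hsub : s ∩ φ T ⁻¹' closedBall x₀ δ ⊆ regionOfAttraction φ x₀ :=
    fun y hy => hreg.mem_regionOfAttraction hφ T.2 hy.2
  have hB (t : ℝ) (ht : t ∈ Icc 0 (T : ℝ)) (y) (hy : y ∈ s) : ‖φ t y - x₀‖ ≤ B := by
    rw [← dist_eq_norm]
    calc dist (φ t y) x₀ ≤ dist (φ t y) x + dist x x₀ := dist_triangle _ _ _
      _ ≤ R + dist x x₀ := by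
          gcongr
          exact mem_closedBall.1 ((hLs t ht).2 hy)
      _ ≤ B := Real.le_coe_toNNReal _
  have hhead := lipschitzOnWith_intervalIntegral (T := T) (F := fun t y => ‖φ t y - x₀‖ ^ p)
    (fun y _ => hφ.intervalIntegrable_norm_sub_pow x₀ p y T.2)
    fun t ht => lipschitzOnWith_norm_sub_pow (hLs t ht).1 (hB t ht) p
  have htail := (hreg.lipschitzOnWith δ le_rfl).comp
    ((hLs T hend).1.mono inter_subset_left) fun _ hy => hy.2
  have hsum := (hhead.mono inter_subset_left).add htail
  refine ⟨T * (p * B ^ (p - 1) * L) + C * δ * L, _, hsT, hsub, fun y hy z hz => ?_⟩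
  rw [hreg.trajectoryCost_eq_integral_add hφ (hsub hy) T.2,
    hreg.trajectoryCost_eq_integral_add hφ (hsub hz) T.2]
  exact hsum hy hz

theorem isOpen_regionOfAttraction [ProperSpace E] (hreg : IsCostRegularNear φ x₀ p δ C)
    (hφ : IsForwardFlow f φ) (hf : LocallyLipschitz f) : IsOpen (regionOfAttraction φ x₀) :=
  isOpen_iff_mem_nhds.2 fun _ hx =>
    let ⟨_, _, hs, hsub, _⟩ := hreg.exists_lipschitzOnWith_trajectoryCost hφ hf hx
    mem_of_superset hs hsub

theorem locallyLipschitzOn_trajectoryCost [ProperSpace E] (hreg : IsCostRegularNear φ x₀ p δ C)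
    (hφ : IsForwardFlow f φ) (hf : LocallyLipschitz f) :
    LocallyLipschitzOn (regionOfAttraction φ x₀) (trajectoryCost φ x₀ p) := fun _ hx =>
  let ⟨K, s, hs, _, hK⟩ := hreg.exists_lipschitzOnWith_trajectoryCost hφ hf hx
  ⟨K, s, mem_nhdsWithin_of_mem_nhds hs, hK⟩

end IsCostRegularNear

theorem IsForwardFlow.isLittleO_integral_norm_sub_pow [ProperSpace E] (hφ : IsForwardFlow f φ)
    (hf : LocallyLipschitz f) (x₀ : E) (p : ℕ) (x : E) :
    (fun q : ℝ × E => (∫ t in (0 : ℝ)..q.1, ‖φ t q.2 - x₀‖ ^ p) - q.1 * ‖x - x₀‖ ^ p)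
      =o[𝓝[>] 0 ×ˢ 𝓝 x] Prod.fst := by
  refine isLittleO_iff.2 fun c hc => ?_
  have hpos : ∀ᶠ q : ℝ × E in 𝓝[>] 0 ×ˢ 𝓝 x, 0 < q.1 :=
    tendsto_fst.eventually self_mem_nhdsWithin
  have hcont : ContinuousAt (fun y => ‖y - x₀‖ ^ p) x := by fun_prop
  filter_upwards [hpos, hφ.eventually_forall_mem_Icc hf (hcont (closedBall_mem_nhds _ hc))]
    with ⟨h, y⟩ (hh : 0 < h) hclose
  have hbound := intervalIntegral.norm_integral_le_of_norm_le_const (a := 0) (b := h) (C := c)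
    (f := fun t => ‖φ t y - x₀‖ ^ p - ‖x - x₀‖ ^ p) fun t ht => by
      rw [uIoc_of_le hh.le] at ht
      exact mem_closedBall.1 (hclose t ⟨ht.1.le, ht.2⟩)
  rw [intervalIntegral.integral_sub (hφ.intervalIntegrable_norm_sub_pow x₀ p y hh.le)
    intervalIntegrable_const] at hbound
  simpa [abs_of_pos hh] using hbound

namespace IsCostRegularNear

theorem hasStrictDirDerivAt_trajectoryCost [ProperSpace E] (hreg : IsCostRegularNear φ x₀ p δ C)
    (hφ : IsForwardFlow f φ) (hf : LocallyLipschitz f) (hx : x ∈ regionOfAttraction φ x₀) :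
    HasStrictDirDerivAt (trajectoryCost φ x₀ p) (-‖x - x₀‖ ^ p) (f x) x := by
  obtain ⟨K, s, hs, hsub, hK⟩ := hreg.exists_lipschitzOnWith_trajectoryCost hφ hf hx
  have hpos : ∀ᶠ q : ℝ × E in 𝓝[>] 0 ×ˢ 𝓝 x, 0 < q.1 :=
    tendsto_fst.eventually self_mem_nhdsWithin
  have hq : Tendsto (fun q : ℝ × E => q.2 + q.1 • f x) (𝓝[>] 0 ×ˢ 𝓝 x) (𝓝 x) := by
    have h : Tendsto (fun q : ℝ × E => q.2 + q.1 • f x) (𝓝 (0, x)) (𝓝 (x + (0 : ℝ) • f x)) :=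
      Continuous.tendsto (by fun_prop) (0, x)
    rw [zero_smul, add_zero, nhds_prod_eq] at h
    exact h.mono_left (prod_mono nhdsWithin_le_nhds le_rfl)
  have hstep : (fun q : ℝ × E => trajectoryCost φ x₀ p (q.2 + q.1 • f x)
      - trajectoryCost φ x₀ p (φ q.1 q.2)) =o[𝓝[>] 0 ×ˢ 𝓝 x] Prod.fst := by
    refine IsBigO.trans_isLittleO (.of_bound K ?_) (hφ.isLittleO_sub_sub_smul hf x)
    filter_upwards [hpos, hq hs, hφ.eventually_forall_mem_Icc hf hs] with q h0 hqs hφs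
    have h := hK.norm_sub_le hqs (hφs q.1 (right_mem_Icc.2 h0.le))
    rwa [norm_sub_rev (_ + _), sub_add_eq_sub_sub] at h
  refine (hstep.sub (hφ.isLittleO_integral_norm_sub_pow hf x₀ p x)).congr' ?_ .rfl
  filter_upwards [hpos, tendsto_snd.eventually hs] with q h0 hqs
  rw [hreg.trajectoryCost_eq_integral_add hφ (hsub hqs) h0.le]
  ring

theorem tendsto_trajectoryCost_atTop [ProperSpace E] (hreg : IsCostRegularNear φ x₀ p δ C)
    (hφ : IsForwardFlow f φ) (hf : LocallyLipschitz f) (hy : y ∉ regionOfAttraction φ x₀) :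
    Tendsto (trajectoryCost φ x₀ p) (𝓝[regionOfAttraction φ x₀] y) atTop := by
  have hδ : (0 : ℝ) < δ := NNReal.coe_pos.2 hreg.pos
  have hlarge : Tendsto (fun T : ℝ => T * (δ / 2 : ℝ) ^ p) atTop atTop :=
    tendsto_id.atTop_mul_const (by positivity)
  refine tendsto_atTop.2 fun A => ?_
  obtain ⟨T, hT, hTA⟩ := ((eventually_ge_atTop 0).and (hlarge.eventually_ge_atTop A)).exists
  obtain ⟨K, _, s, hs, hKs⟩ := hφ.exists_lipschitzOnWith_mapsTo_closedBall hf y T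
  have hnear : ∀ᶠ x in 𝓝 y, K * dist x y < δ / 2 :=
    (Continuous.tendsto (by fun_prop) y).eventually_lt_const (by simpa using hδ)
  filter_upwards [mem_nhdsWithin_of_mem_nhds hs, mem_nhdsWithin_of_mem_nhds hnear,
    self_mem_nhdsWithin] with x hxs hxy hx
  refine hTA.trans (hreg.mul_le_trajectoryCost hφ hx hT fun t ht => ?_)
  have hyt : δ < dist (φ t y) x₀ :=
    not_le.1 fun h => hy (hreg.mem_regionOfAttraction hφ ht.1 h)
  have hxyt := (hKs t ht).1.dist_le_mul x hxs y (mem_of_mem_nhds hs)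
  have htri := dist_triangle_left (φ t y) x₀ (φ t x)
  rw [← dist_eq_norm]
  gcongr
  linarith

theorem exists_pos_le_trajectoryCost [ProperSpace E] (hreg : IsCostRegularNear φ x₀ p δ C)
    (hφ : IsForwardFlow f φ) (hf : LocallyLipschitz f) {r : ℝ} (hr : 0 < r) (hrδ : r ≤ δ) :
    ∃ m > 0, ∀ x ∈ regionOfAttraction φ x₀, r ≤ ‖x - x₀‖ → m ≤ trajectoryCost φ x₀ p x := by
  have hsub : sphere x₀ r ⊆ regionOfAttraction φ x₀ :=
    (sphere_subset_closedBall.trans (closedBall_subset_closedBall hrδ)).trans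
      hreg.closedBall_subset
  obtain ⟨m, hm, hmin⟩ := (isCompact_sphere x₀ r).exists_forall_le'
    ((hreg.locallyLipschitzOn_trajectoryCost hφ hf).continuousOn.mono hsub) (a := 0)
    fun y hy => hreg.trajectoryCost_pos hφ (hsub hy) (ne_of_mem_sphere hy hr.ne')
  refine ⟨m, hm, fun x hx hrx => ?_⟩
  obtain ⟨T, hT, hTx⟩ := exists_flow_mem_of_mem_regionOfAttraction hx (ball_mem_nhds x₀ hr)
  have hcont : ContinuousOn (fun t => dist (φ t x) x₀) (Icc 0 T) :=
    ((continuous_id.dist continuous_const).comp_continuousOn (hφ.continuousOn x)).mono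
      Icc_subset_Ici_self
  obtain ⟨t, ht, hcross⟩ : r ∈ (fun t => dist (φ t x) x₀) '' Icc 0 T :=
    intermediate_value_Icc' hT hcont ⟨(mem_ball.1 hTx).le, by rwa [hφ.zero, dist_eq_norm]⟩
  exact (hmin _ hcross).trans (hreg.trajectoryCost_flow_le hφ hx ht.1)

end IsCostRegularNear

end Cost

section LyapunovPair

open Set Metric Asymptotics
open scoped NNReal

variable {E : Type*} [NormedAddCommGroup E] [NormedSpace ℝ E]

/-- `V` is a `C¹` Lyapunov function on `D` for the equilibrium `x₀` of `ẋ = f x`, with decay rate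
`η` and blowing up at the boundary of `D` (a *maximal* Lyapunov function). -/
structure IsMaximalLyapunovPair (f : E → E) (x₀ : E) (D : Set E) (V η : E → ℝ) : Prop where
  contDiffOn : ContDiffOn ℝ 1 V D
  continuous_rate : Continuous η
  map_self : V x₀ = 0
  rate_self : η x₀ = 0
  exists_lt : ∃ c₀ > (0 : ℝ), ∀ c₃, 0 < c₃ → c₃ < c₀ → ∃ c₁ > (0 : ℝ), ∃ c₂ > (0 : ℝ),
    ∀ x ∈ D, c₃ ≤ ‖x - x₀‖ → c₁ < V x ∧ c₂ < η x
  tendsto_atTop : ∀ y ∈ frontier D, Tendsto V (𝓝[D] y) atTop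
  fderiv_apply : ∀ x ∈ D, fderiv ℝ V x (f x) = -η x

theorem IsMaximalLyapunovPair.pos {f : E → E} {x₀ x : E} {D : Set E} {V η : E → ℝ}
    (h : IsMaximalLyapunovPair f x₀ D V η) (hx : x ∈ D) (hne : x ≠ x₀) : 0 < V x ∧ 0 < η x := by
  obtain ⟨c₀, hc₀, hlt⟩ := h.exists_lt
  have hnorm : 0 < ‖x - x₀‖ := norm_pos_iff.2 (sub_ne_zero.2 hne)
  obtain ⟨c₁, hc₁, c₂, hc₂, hbound⟩ := hlt (min ‖x - x₀‖ (c₀ / 2)) (lt_min hnorm (half_pos hc₀))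
    ((min_le_right _ _).trans_lt (half_lt_self hc₀))
  exact (hbound x hx (min_le_left _ _)).imp hc₁.trans hc₂.trans

/-- `V` is a `C¹` approximation of the trajectory cost on the punctured region of attraction. The
error of the derivative along `f` vanishes at the boundary, so that this derivative extends
continuously to the whole space. -/
structure IsSmoothedCost (f : E → E) (φ : ℝ → E → E) (x₀ : E) (p : ℕ) (V : E → ℝ) : Prop where
  contDiffOn : ContDiffOn ℝ 1 V (regionOfAttraction φ x₀ \ {x₀})
  map_self : V x₀ = trajectoryCost φ x₀ p x₀
  abs_sub_le : ∀ x ∈ regionOfAttraction φ x₀ \ {x₀},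
    |V x - trajectoryCost φ x₀ p x| ≤ trajectoryCost φ x₀ p x / 2
  abs_fderiv_apply_add_le : ∀ x ∈ regionOfAttraction φ x₀ \ {x₀},
    |fderiv ℝ V x (f x) + ‖x - x₀‖ ^ p| ≤ ‖x - x₀‖ ^ p / 2
  abs_fderiv_apply_add_le_infDist : ∀ x ∈ regionOfAttraction φ x₀ \ {x₀},
    |fderiv ℝ V x (f x) + ‖x - x₀‖ ^ p| ≤ infDist x (regionOfAttraction φ x₀ \ {x₀})ᶜ
  norm_fderiv_le : ∀ x ∈ regionOfAttraction φ x₀ \ {x₀}, ∀ K : ℝ≥0,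
    LipschitzOnWith K (trajectoryCost φ x₀ p) (closedBall x₀ (2 * ‖x - x₀‖)) →
      ‖fderiv ℝ V x‖ ≤ 2 * K

variable {f : E → E} {φ : ℝ → E → E} {x₀ x : E} {p : ℕ} {δ C : ℝ≥0} {V : E → ℝ}

theorem IsCostRegularNear.exists_isSmoothedCost [FiniteDimensional ℝ E]
    (hreg : IsCostRegularNear φ x₀ p δ C) (hφ : IsForwardFlow f φ) (hf : LocallyLipschitz f) :
    ∃ V, IsSmoothedCost f φ x₀ p V := by
  have : ProperSpace E := FiniteDimensional.proper ℝ E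
  set U := regionOfAttraction φ x₀ \ {x₀}
  have hU : IsOpen U := (hreg.isOpen_regionOfAttraction hφ hf).sdiff isClosed_singleton
  have hx₀U : x₀ ∈ Uᶜ := fun h => h.2 rfl
  have hLip := (hreg.locallyLipschitzOn_trajectoryCost hφ hf).mono (sdiff_subset : U ⊆ _)
  set ε : E → ℝ := fun x =>
    min (infDist x Uᶜ) (min (‖x - x₀‖ ^ p / 2) (trajectoryCost φ x₀ p x / 2))
  have hεc : ContinuousOn ε U := (continuous_infDist_pt _).continuousOn.inf
    (ContinuousOn.inf (by fun_prop) (hLip.continuousOn.div_const 2))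
  have hε : ∀ x ∈ U, 0 < ε x := fun x hx => by
    refine lt_min ?_ (lt_min ?_ (half_pos (hreg.trajectoryCost_pos hφ hx.1 hx.2)))
    · exact (hU.isClosed_compl.notMem_iff_infDist_pos ⟨x₀, hx₀U⟩).1 (not_not.2 hx)
    · exact half_pos (pow_pos (norm_pos_iff.2 (sub_ne_zero.2 hx.2)) p)
  obtain ⟨V, hV, hVout, happrox⟩ := exists_contDiffOn_approx_fderiv_apply hU hεc hε
    hf.continuous.continuousOn (g := fun x => -‖x - x₀‖ ^ p) (by fun_prop) hLip
    fun x hx => hreg.hasStrictDirDerivAt_trajectoryCost hφ hf hx.1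
  have hderiv : ∀ x ∈ U, |fderiv ℝ V x (f x) + ‖x - x₀‖ ^ p| ≤ ε x := fun x hx => by
    simpa only [sub_neg_eq_add] using (happrox x hx).2.1
  refine ⟨V, hV, hVout x₀ hx₀U, fun x hx => ?_, fun x hx => ?_, fun x hx => ?_,
    fun x hx K hK => (happrox x hx).2.2 K (hK.mono fun y hy => ?_)⟩
  · exact (happrox x hx).1.trans ((min_le_right _ _).trans (min_le_right _ _))
  · exact (hderiv x hx).trans ((min_le_right _ _).trans (min_le_left _ _))
  · exact (hderiv x hx).trans (min_le_left _ _)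
  · have hyx : dist y x < ‖x - x₀‖ := by
      rw [← dist_eq_norm]
      exact (mem_ball.1 hy).trans_le ((min_le_left _ _).trans (infDist_le_dist_of_mem hx₀U))
    rw [mem_closedBall, two_mul]
    nth_rw 2 [← dist_eq_norm]
    exact (dist_triangle y x x₀).trans (by gcongr)

namespace IsSmoothedCost

theorem le_map (hV : IsSmoothedCost f φ x₀ p V) (hreg : IsCostRegularNear φ x₀ p δ C)
    (hx : x ∈ regionOfAttraction φ x₀) : trajectoryCost φ x₀ p x / 2 ≤ V x := by
  obtain rfl | hne := eq_or_ne x x₀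
  · rw [hV.map_self, hreg.trajectoryCost_self, zero_div]
  · linarith [(abs_le.1 (hV.abs_sub_le x ⟨hx, hne⟩)).1]

theorem abs_map_le (hV : IsSmoothedCost f φ x₀ p V) (hreg : IsCostRegularNear φ x₀ p δ C)
    (hx : x ∈ regionOfAttraction φ x₀) : |V x| ≤ 2 * trajectoryCost φ x₀ p x := by
  obtain rfl | hne := eq_or_ne x x₀
  · rw [hV.map_self, hreg.trajectoryCost_self, abs_zero, mul_zero]
  · have h := abs_le.1 (hV.abs_sub_le x ⟨hx, hne⟩)
    exact abs_le.2 (by constructor <;> linarith [trajectoryCost_nonneg φ x₀ p x])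

theorem hasFDerivAt_self (hV : IsSmoothedCost f φ x₀ p V)
    (hreg : IsCostRegularNear φ x₀ p δ C) : HasFDerivAt V (0 : E →L[ℝ] ℝ) x₀ := by
  refine IsBigO.hasFDerivAt (n := 2) (.of_bound (2 * C) ?_) one_lt_two
  filter_upwards [closedBall_mem_nhds x₀ (NNReal.coe_pos.2 hreg.pos)] with x hx
  have hcost : trajectoryCost φ x₀ p x ≤ C * ‖x - x₀‖ * ‖x - x₀‖ := by
    have hxδ : ‖x - x₀‖₊ ≤ δ := by simpa [← NNReal.coe_le_coe, dist_eq_norm] using hx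
    have h := (hreg.lipschitzOnWith _ hxδ).norm_sub_le (x := x) (y := x₀)
      (by simp [dist_eq_norm]) (mem_closedBall_self (norm_nonneg (x - x₀)))
    rwa [hreg.trajectoryCost_self, sub_zero, Real.norm_of_nonneg (trajectoryCost_nonneg ..)] at h
  calc ‖V x‖ ≤ 2 * trajectoryCost φ x₀ p x := hV.abs_map_le hreg (hreg.closedBall_subset hx)
    _ ≤ 2 * (C * ‖x - x₀‖ * ‖x - x₀‖) := by gcongr
    _ = 2 * C * ‖‖x - x₀‖ ^ 2‖ := by
        rw [norm_pow, norm_norm]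
        ring

theorem tendsto_fderiv (hV : IsSmoothedCost f φ x₀ p V) (hreg : IsCostRegularNear φ x₀ p δ C) :
    Tendsto (fderiv ℝ V) (𝓝[≠] x₀) (𝓝 0) := by
  have hlim : Tendsto (fun x => 4 * C * ‖x - x₀‖) (𝓝[≠] x₀) (𝓝 0) :=
    tendsto_nhdsWithin_of_tendsto_nhds (Continuous.tendsto' (by fun_prop) _ _ (by simp))
  refine squeeze_zero_norm' ?_ hlim
  have hδ : (0 : ℝ) < δ / 2 := half_pos (NNReal.coe_pos.2 hreg.pos)
  filter_upwards [self_mem_nhdsWithin, mem_nhdsWithin_of_mem_nhds (closedBall_mem_nhds x₀ hδ)]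
    with x hne hx
  rw [mem_closedBall, dist_eq_norm] at hx
  have hroa : x ∈ regionOfAttraction φ x₀ :=
    hreg.closedBall_subset (by rw [mem_closedBall, dist_eq_norm]; linarith)
  have hK := hreg.lipschitzOnWith (2 * ‖x - x₀‖₊) (by
    rw [← NNReal.coe_le_coe]
    push_cast
    linarith)
  refine (hV.norm_fderiv_le x ⟨hroa, hne⟩ _ hK).trans_eq ?_
  push_cast
  ring

/-- The decay rate of a smoothed cost `V`: minus its derivative along `f` on the punctured region
of attraction, and `‖x - x₀‖ᵖ`, the rate of the trajectory cost, elsewhere. -/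
def decayRate (f : E → E) (φ : ℝ → E → E) (x₀ : E) (p : ℕ) (V : E → ℝ) (x : E) : ℝ :=
  ‖x - x₀‖ ^ p - (regionOfAttraction φ x₀ \ {x₀}).indicator
    (fun y => fderiv ℝ V y (f y) + ‖y - x₀‖ ^ p) x

theorem decayRate_self (hreg : IsCostRegularNear φ x₀ p δ C) :
    decayRate f φ x₀ p V x₀ = 0 := by
  simp [decayRate, hreg.ne_zero]

theorem decayRate_of_ne (hx : x ∈ regionOfAttraction φ x₀) (hne : x ≠ x₀) :
    decayRate f φ x₀ p V x = -fderiv ℝ V x (f x) := by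
  rw [decayRate, indicator_of_mem (show x ∈ regionOfAttraction φ x₀ \ {x₀} from ⟨hx, hne⟩)]
  ring

theorem continuous_decayRate [ProperSpace E] (hV : IsSmoothedCost f φ x₀ p V)
    (hreg : IsCostRegularNear φ x₀ p δ C) (hφ : IsForwardFlow f φ) (hf : LocallyLipschitz f) :
    Continuous (decayRate f φ x₀ p V) := by
  have hU := (hreg.isOpen_regionOfAttraction hφ hf).sdiff (isClosed_singleton (x := x₀))
  have hderiv := (hV.contDiffOn.continuousOn_fderiv_of_isOpen hU le_rfl).clm_apply
    hf.continuous.continuousOn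
  refine .sub (by fun_prop) (continuous_indicator_of_tendsto_frontier hU
    (hderiv.add (by fun_prop)) fun y hy => ?_)
  rw [hU.frontier_eq] at hy
  refine squeeze_zero_norm' (eventually_mem_nhdsWithin.mono hV.abs_fderiv_apply_add_le_infDist)
    (tendsto_nhdsWithin_of_tendsto_nhds ((continuous_infDist_pt _).tendsto' y 0 ?_))
  exact infDist_zero_of_mem hy.2

theorem le_decayRate (hV : IsSmoothedCost f φ x₀ p V) (hx : x ∈ regionOfAttraction φ x₀)
    (hne : x ≠ x₀) : ‖x - x₀‖ ^ p / 2 ≤ decayRate f φ x₀ p V x := by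
  rw [decayRate_of_ne hx hne]
  linarith [(abs_le.1 (hV.abs_fderiv_apply_add_le x ⟨hx, hne⟩)).2]

theorem fderiv_apply (hV : IsSmoothedCost f φ x₀ p V) (hreg : IsCostRegularNear φ x₀ p δ C)
    (hx : x ∈ regionOfAttraction φ x₀) : fderiv ℝ V x (f x) = -decayRate f φ x₀ p V x := by
  obtain rfl | hne := eq_or_ne x x₀
  · rw [decayRate_self hreg, (hV.hasFDerivAt_self hreg).fderiv, zero_apply, neg_zero]
  · rw [decayRate_of_ne hx hne, neg_neg]

theorem isMaximalLyapunovPair [ProperSpace E] (hV : IsSmoothedCost f φ x₀ p V)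
    (hreg : IsCostRegularNear φ x₀ p δ C) (hφ : IsForwardFlow f φ) (hf : LocallyLipschitz f) :
    IsMaximalLyapunovPair f x₀ (regionOfAttraction φ x₀) V (decayRate f φ x₀ p V) where
  contDiffOn := contDiffOn_one_of_contDiffOn_punctured (hreg.isOpen_regionOfAttraction hφ hf)
    hV.contDiffOn (hV.hasFDerivAt_self hreg) (hV.tendsto_fderiv hreg)
  continuous_rate := hV.continuous_decayRate hreg hφ hf
  map_self := by rw [hV.map_self, hreg.trajectoryCost_self]
  rate_self := decayRate_self hreg
  exists_lt := by
    refine ⟨δ, NNReal.coe_pos.2 hreg.pos, fun r hr hrδ => ?_⟩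
    obtain ⟨m, hm, hmin⟩ := hreg.exists_pos_le_trajectoryCost hφ hf hr hrδ.le
    refine ⟨m / 4, by positivity, r ^ p / 4, by positivity, fun x hx hrx => ⟨?_, ?_⟩⟩
    · linarith [hmin x hx hrx, hV.le_map hreg hx]
    · have hne : x ≠ x₀ := sub_ne_zero.1 (norm_pos_iff.1 (hr.trans_le hrx))
      have hpow : r ^ p ≤ ‖x - x₀‖ ^ p := by gcongr
      linarith [hV.le_decayRate hx hne, pow_pos hr p]
  tendsto_atTop y hy := by
    rw [(hreg.isOpen_regionOfAttraction hφ hf).frontier_eq] at hy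
    refine tendsto_atTop_mono' _ ?_
      ((hreg.tendsto_trajectoryCost_atTop hφ hf hy.2).atTop_div_const two_pos)
    filter_upwards [self_mem_nhdsWithin] with x hx using hV.le_map hreg hx
  fderiv_apply _ hx := hV.fderiv_apply hreg hx

end IsSmoothedCost

end LyapunovPair

section ZubovPair

open Set Metric MeasureTheory

theorem tendsto_nhdsWithin_iff_forall_seq_mem {X Y : Type*} [TopologicalSpace X]
    [FirstCountableTopology X] {s : Set X} {g : X → Y} {y : X} {l : Filter Y} :
    Tendsto g (𝓝[s] y) l ↔ ∀ u : ℕ → X, (∀ k, u k ∈ s) → Tendsto u atTop (𝓝 y) →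
      Tendsto (fun k => g (u k)) atTop l := by
  rw [nhdsWithin, ← map_comap_setCoe_val, tendsto_map'_iff, tendsto_iff_seq_tendsto]
  exact ⟨fun h u hu huy => h (fun k => ⟨u k, hu k⟩) (tendsto_comap_iff.2 huy),
    fun h u huy => h (fun k => u k) (fun k => (u k).2) (tendsto_comap_iff.1 huy)⟩

/-- `(W, η)` satisfies Zubov's conditions for the equilibrium `x₀` of `ẋ = f x` on the open set
`D`: the conditions (1)-(5) of the theorem, with (4) stated through filters and (5) through the
Fréchet derivative, so that they make sense in any normed space. -/
structure IsZubovPair {E : Type*} [NormedAddCommGroup E] [NormedSpace ℝ E] (f : E → E) (x₀ : E)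
    (D : Set E) (W η : E → ℝ) : Prop where
  contDiffOn : ContDiffOn ℝ 1 W D
  continuous_rate : Continuous η
  pos_and_lt_one : ∀ x ∈ D, x ≠ x₀ → 0 < W x ∧ W x < 1
  map_self : W x₀ = 0
  rate_self : η x₀ = 0
  rate_pos : ∀ x ∈ D, x ≠ x₀ → 0 < η x
  exists_lt : ∃ c₀ > (0 : ℝ), ∀ c₃, 0 < c₃ → c₃ < c₀ → ∃ c₁ > (0 : ℝ), ∃ c₂ > (0 : ℝ),
    ∀ x ∈ D, c₃ ≤ ‖x - x₀‖ → c₁ < W x ∧ c₂ < η x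
  tendsto_one : ∀ y ∈ frontier D, Tendsto W (𝓝[D] y) (𝓝 1)
  fderiv_apply : ∀ x ∈ D, fderiv ℝ W x (f x) = -(η x * (1 - W x))

theorem isZubovPair_iff_exists_gradient {E : Type*} [NormedAddCommGroup E] [InnerProductSpace ℝ E]
    [CompleteSpace E] {f : E → E} {x₀ : E} {D : Set E} {W η : E → ℝ} (hD : IsOpen D) :
    IsZubovPair f x₀ D W η ↔ ∃ gW : E → E,
      ContinuousOn W D ∧ ContDiffOn ℝ 1 W D ∧ Continuous η ∧
      (∀ x ∈ D, x ≠ x₀ → 0 < W x ∧ W x < 1) ∧ W x₀ = 0 ∧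
      (η x₀ = 0 ∧ ∀ x ∈ D, x ≠ x₀ → 0 < η x) ∧
      (∃ c₀ > (0 : ℝ), ∀ c₃, 0 < c₃ → c₃ < c₀ → ∃ c₁ > (0 : ℝ), ∃ c₂ > (0 : ℝ),
        ∀ x ∈ D, c₃ ≤ ‖x - x₀‖ → c₁ < W x ∧ c₂ < η x) ∧
      (∀ y ∈ frontier D, ∀ xk : ℕ → E, (∀ k, xk k ∈ D) →
        Tendsto xk atTop (𝓝 y) → Tendsto (fun k => W (xk k)) atTop (𝓝 1)) ∧
      (∀ x ∈ D, HasGradientAt W (gW x) x ∧ ⟪gW x, f x⟫ = -(η x * (1 - W x))) := by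
  constructor
  · rintro ⟨hW, hη, hpos, hW₀, hη₀, hηpos, hlt, hlim, hderiv⟩
    refine ⟨gradient W, hW.continuousOn, hW, hη, hpos, hW₀, ⟨hη₀, hηpos⟩, hlt,
      fun y hy => tendsto_nhdsWithin_iff_forall_seq_mem.1 (hlim y hy),
      fun x hx => ⟨?_, inner_gradient_left.trans (hderiv x hx)⟩⟩
    exact ((hW.differentiableOn one_ne_zero).differentiableAt (hD.mem_nhds hx)).hasGradientAt
  · rintro ⟨gW, -, hW, hη, hpos, hW₀, ⟨hη₀, hηpos⟩, hlt, hlim, hgrad⟩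
    refine ⟨hW, hη, hpos, hW₀, hη₀, hηpos, hlt,
      fun y hy => tendsto_nhdsWithin_iff_forall_seq_mem.2 (hlim y hy),
      fun x hx => (hgrad x hx).1.fderiv_apply.trans (hgrad x hx).2⟩

variable {E : Type*} [NormedAddCommGroup E] [NormedSpace ℝ E] {f : E → E} {φ : ℝ → E → E}
  {x₀ x : E} {D : Set E} {V W η : E → ℝ} {t : ℝ}

theorem IsMaximalLyapunovPair.isZubovPair (h : IsMaximalLyapunovPair f x₀ D V η)
    (hD : IsOpen D) : IsZubovPair f x₀ D (fun x => 1 - Real.exp (-V x)) η where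
  contDiffOn := contDiffOn_const.sub h.contDiffOn.neg.exp
  continuous_rate := h.continuous_rate
  pos_and_lt_one x hx hne := by simp [h.pos hx hne, Real.exp_pos]
  map_self := by simp [h.map_self]
  rate_self := h.rate_self
  rate_pos _ hx hne := (h.pos hx hne).2
  exists_lt := by
    obtain ⟨c₀, hc₀, hlt⟩ := h.exists_lt
    refine ⟨c₀, hc₀, fun c₃ hc₃ hc₃₀ => ?_⟩
    obtain ⟨c₁, hc₁, c₂, hc₂, hbound⟩ := hlt c₃ hc₃ hc₃₀
    refine ⟨1 - Real.exp (-c₁), by simpa, c₂, hc₂, fun x hx hr => ?_⟩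
    simpa using hbound x hx hr
  tendsto_one y hy := by
    simpa using (Real.tendsto_exp_neg_atTop_nhds_zero.comp (h.tendsto_atTop y hy)).const_sub 1
  fderiv_apply x hx := by
    have hV : DifferentiableAt ℝ V x :=
      (h.contDiffOn.differentiableOn one_ne_zero).differentiableAt (hD.mem_nhds hx)
    have hW : HasFDerivAt (fun x => 1 - Real.exp (-V x)) _ x :=
      hV.hasFDerivAt.neg.exp.const_sub 1
    rw [hW.fderiv]
    simp [h.fderiv_apply x hx, mul_comm]

namespace IsZubovPair

theorem nonneg (h : IsZubovPair f x₀ D W η) (hx : x ∈ D) : 0 ≤ W x := by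
  obtain rfl | hne := eq_or_ne x x₀
  exacts [h.map_self.ge, (h.pos_and_lt_one x hx hne).1.le]

theorem lt_one (h : IsZubovPair f x₀ D W η) (hx : x ∈ D) : W x < 1 := by
  obtain rfl | hne := eq_or_ne x x₀
  exacts [h.map_self.trans_lt one_pos, (h.pos_and_lt_one x hx hne).2]

theorem indicator_ne_zero_iff (h : IsZubovPair f x₀ D W η) :
    D.indicator (fun y => 1 - W y) x ≠ 0 ↔ x ∈ D := by
  rw [indicator_apply_ne_zero, mem_inter_iff, and_iff_left_iff_imp]
  exact fun hx => (sub_pos.2 (h.lt_one hx)).ne'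

theorem continuous_indicator (h : IsZubovPair f x₀ D W η) (hD : IsOpen D) :
    Continuous (D.indicator fun y => 1 - W y) :=
  continuous_indicator_of_tendsto_frontier hD (continuousOn_const.sub h.contDiffOn.continuousOn)
    fun y hy => by simpa using (h.tendsto_one y hy).const_sub 1

theorem indicator_flow (h : IsZubovPair f x₀ D W η) (hφ : IsForwardFlow f φ) (hD : IsOpen D)
    (ht : 0 ≤ t) : D.indicator (fun y => 1 - W y) (φ t x) =
      D.indicator (fun y => 1 - W y) x * Real.exp (∫ s in (0 : ℝ)..t, η (φ s x)) := by
  have heq := eq_mul_exp_integral_of_hasDerivWithinAt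
    (u := fun s => D.indicator (fun y => 1 - W y) (φ s x)) (g := fun s => η (φ s x))
    ((h.continuous_indicator hD).comp_continuousOn (hφ.continuousOn x))
    (h.continuous_rate.comp_continuousOn (hφ.continuousOn x)) (fun s hs hne => ?_) ht
  · simpa only [hφ.zero] using heq
  rw [h.indicator_ne_zero_iff] at hne
  have hDs : D ∈ 𝓝 (φ s x) := hD.mem_nhds hne
  have hW := ((h.contDiffOn.differentiableOn one_ne_zero).differentiableAt hDs).hasFDerivAt
  have hind : D.indicator (fun y => 1 - W y) =ᶠ[𝓝 (φ s x)] fun y => 1 - W y :=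
    mem_of_superset hDs fun y hy => indicator_of_mem hy _
  have hderiv := ((hW.const_sub 1).congr_of_eventuallyEq hind).comp_hasDerivWithinAt s
    (hφ.hasDerivWithinAt x s hs)
  rwa [neg_apply, h.fderiv_apply _ hne, neg_neg,
    ← indicator_of_mem hne fun y => 1 - W y] at hderiv

theorem flow_mem_iff (h : IsZubovPair f x₀ D W η) (hφ : IsForwardFlow f φ) (hD : IsOpen D)
    (ht : 0 ≤ t) : φ t x ∈ D ↔ x ∈ D := by
  rw [← h.indicator_ne_zero_iff, ← h.indicator_ne_zero_iff, h.indicator_flow hφ hD ht,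
    mul_ne_zero_iff, and_iff_left (Real.exp_ne_zero _)]

theorem regionOfAttraction_subset (h : IsZubovPair f x₀ D W η) (hφ : IsForwardFlow f φ)
    (hD : IsOpen D) (hx₀ : x₀ ∈ D) : regionOfAttraction φ x₀ ⊆ D := fun _ hx =>
  let ⟨_, hT, hTx⟩ := exists_flow_mem_of_mem_regionOfAttraction hx (hD.mem_nhds hx₀)
  (h.flow_mem_iff hφ hD hT).1 hTx

theorem mul_exp_le_one (h : IsZubovPair f x₀ D W η) (hφ : IsForwardFlow f φ) (hD : IsOpen D)
    (hx : x ∈ D) {c : ℝ} (ht : 0 ≤ t) (hc : ∀ s ∈ Icc 0 t, c ≤ η (φ s x)) :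
    (1 - W x) * Real.exp (t * c) ≤ 1 := by
  have hxt := (h.flow_mem_iff hφ hD ht).2 hx
  have hflow := h.indicator_flow hφ hD (x := x) ht
  rw [indicator_of_mem hx, indicator_of_mem hxt] at hflow
  have hintegral : t * c ≤ ∫ s in (0 : ℝ)..t, η (φ s x) := by
    simpa using intervalIntegral.integral_mono_on (μ := volume) ht intervalIntegrable_const
      (((h.continuous_rate.comp_continuousOn (hφ.continuousOn x)).mono
        Icc_subset_Ici_self).intervalIntegrable_of_Icc ht) hc
  calc (1 - W x) * Real.exp (t * c)
      ≤ (1 - W x) * Real.exp (∫ s in (0 : ℝ)..t, η (φ s x)) := by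
        gcongr
        exact sub_nonneg.2 (h.lt_one hx).le
    _ = 1 - W (φ t x) := hflow.symm
    _ ≤ 1 := sub_le_self 1 (h.nonneg hxt)

/- A trajectory in `D` that is not attracted to `x₀` stays away from it, so `η` is bounded below
along it and `1 - W` would grow exponentially. -/
theorem subset_regionOfAttraction (h : IsZubovPair f x₀ D W η) (hφ : IsForwardFlow f φ)
    (hD : IsOpen D) (hroa : regionOfAttraction φ x₀ ∈ 𝓝 x₀) : D ⊆ regionOfAttraction φ x₀ := by
  intro x hx
  by_contra hxroa
  obtain ⟨c₀, hc₀, hlt⟩ := h.exists_lt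
  obtain ⟨r, hr, hrroa⟩ := Metric.mem_nhds_iff.1 hroa
  obtain ⟨_, -, c₂, hc₂, hbound⟩ := hlt (min r (c₀ / 2)) (lt_min hr (half_pos hc₀))
    ((min_le_right _ _).trans_lt (half_lt_self hc₀))
  have hrate : ∀ t ≥ 0, c₂ ≤ η (φ t x) := fun t ht => by
    have hfar : φ t x ∉ ball x₀ r := fun hball =>
      hxroa ((hφ.flow_mem_regionOfAttraction_iff ht).1 (hrroa hball))
    rw [mem_ball, not_lt, dist_eq_norm] at hfar
    exact (hbound _ ((h.flow_mem_iff hφ hD ht).2 hx) ((min_le_left _ _).trans hfar)).2.le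
  have hlim : Tendsto (fun t => (1 - W x) * Real.exp (t * c₂)) atTop atTop :=
    (Real.tendsto_exp_atTop.comp (tendsto_id.atTop_mul_const hc₂)).const_mul_atTop
      (sub_pos.2 (h.lt_one hx))
  obtain ⟨t, ht, hgt⟩ := ((eventually_ge_atTop 0).and (hlim.eventually_gt_atTop 1)).exists
  exact (h.mul_exp_le_one hφ hD hx ht fun s hs => hrate s hs.1).not_gt hgt

end IsZubovPair

end ZubovPair

theorem zubov_theorem_general {E : Type*} [NormedAddCommGroup E] [NormedSpace ℝ E]
    [FiniteDimensional ℝ E] {f : E → E} {φ : ℝ → E → E} {x₀ : E} {D : Set E}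
    (hf : LocallyLipschitz f) (hφ : IsForwardFlow f φ) (hstab : IsLocallyExpStable φ x₀)
    (hD : IsOpen D) (hx₀ : x₀ ∈ D) :
    D = regionOfAttraction φ x₀ ↔ ∃ W η, IsZubovPair f x₀ D W η := by
  have : ProperSpace E := FiniteDimensional.proper ℝ E
  obtain ⟨p, δ, C, hreg⟩ := hφ.exists_isCostRegularNear hf hstab
  constructor
  · rintro rfl
    obtain ⟨V, hV⟩ := hreg.exists_isSmoothedCost hφ hf
    exact ⟨_, _, (hV.isMaximalLyapunovPair hreg hφ hf).isZubovPair hD⟩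
  · rintro ⟨W, η, hW⟩
    have hroa : regionOfAttraction φ x₀ ∈ 𝓝 x₀ :=
      (hreg.isOpen_regionOfAttraction hφ hf).mem_nhds (hreg.closedBall_subset (by simp))
    exact (hW.subset_regionOfAttraction hφ hD hroa).antisymm
      (hW.regionOfAttraction_subset hφ hD hx₀)

/-- Zubov's theorem: an open set `D ∋ x_eq` equals the region of attraction
iff there exist `W : D → ℝ` (continuous, `C¹` on `D`) and continuous `η : ℝⁿ → ℝ`
satisfying conditions (1)-(5). -/
theorem zubov_theorem {n : ℕ}
    (f : EuclideanSpace ℝ (Fin n) → EuclideanSpace ℝ (Fin n))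
    (φ : ℝ → EuclideanSpace ℝ (Fin n) → EuclideanSpace ℝ (Fin n))
    (xeq : EuclideanSpace ℝ (Fin n))
    (hf : LocallyLipschitz f)
    (hφ0 : ∀ x, φ 0 x = x)
    (hφd : ∀ x, ∀ t ≥ (0:ℝ), HasDerivWithinAt (fun s => φ s x) (f (φ t x)) (Set.Ici 0) t)
    (hφadd : ∀ x, ∀ s ≥ (0:ℝ), ∀ t ≥ (0:ℝ), φ s (φ t x) = φ (t + s) x)
    (hfeq : f xeq = 0)
    (hstab : ∃ δ > (0:ℝ), ∃ M > (0:ℝ), ∃ c > (0:ℝ), ∀ x : EuclideanSpace ℝ (Fin n),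
      ‖x - xeq‖ ≤ δ → ∀ t ≥ (0:ℝ), ‖φ t x - xeq‖ ≤ M * ‖x - xeq‖ * Real.exp (-c * t))
    (D : Set (EuclideanSpace ℝ (Fin n))) (hD : IsOpen D) (hxeqD : xeq ∈ D) :
    D = {x | Tendsto (fun t => φ t x) atTop (𝓝 xeq)} ↔
      ∃ (W : EuclideanSpace ℝ (Fin n) → ℝ) (η : EuclideanSpace ℝ (Fin n) → ℝ)
        (gW : EuclideanSpace ℝ (Fin n) → EuclideanSpace ℝ (Fin n)),
        ContinuousOn W D ∧ ContDiffOn ℝ 1 W D ∧ Continuous η ∧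
        -- (1)
        (∀ x ∈ D, x ≠ xeq → 0 < W x ∧ W x < 1) ∧ W xeq = 0 ∧
        -- (2)
        (η xeq = 0 ∧ ∀ x ∈ D, x ≠ xeq → 0 < η x) ∧
        -- (3)
        (∃ c₀ > (0:ℝ), ∀ c₃, 0 < c₃ → c₃ < c₀ → ∃ c₁ > (0:ℝ), ∃ c₂ > (0:ℝ),
          ∀ x ∈ D, c₃ ≤ ‖x - xeq‖ → c₁ < W x ∧ c₂ < η x) ∧
        -- (4)
        (∀ y ∈ frontier D, ∀ xk : ℕ → EuclideanSpace ℝ (Fin n), (∀ k, xk k ∈ D) →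
          Tendsto xk atTop (𝓝 y) → Tendsto (fun k => W (xk k)) atTop (𝓝 1)) ∧
        -- (5)
        (∀ x ∈ D, HasGradientAt W (gW x) x ∧ ⟪gW x, f x⟫ = - (η x * (1 - W x))) :=
  (zubov_theorem_general hf ⟨hφ0, hφd, hφadd⟩ hstab hD hxeqD).trans
    (exists₂_congr fun _ _ => isZubovPair_iff_exists_gradient hD)
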